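/- arXiv:1806.08992 — 5 statements merged into one kernel-verified Lean document; each statement's English description precedes it below -/
import Mathlib

section
/- (Asymptotic Gilbert–Varshamov bound for symbol-pair codes) For every prime power q, every real δ ∈ (0,1) with κ_sp(δ) < 1, and every ε > 0, for all sufficiently large n there exists a code C ⊆ F_q^n with minimum pair distance at least δn and rate (log_q |C|)/n ≥ 1 − κ_sp(δ) − ε. -/
/-- The symbol-pair distance between two vectors `x, y : Fin n → F`. -/
def pairDist {F : Type*} [DecidableEq F] {n : ℕ} (x y : Fin n → F) : ℕ :=
  (Finset.univ.filter fun i : Fin n =>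
    (x i, x ⟨(i.1 + 1) % n, Nat.mod_lt _ i.pos⟩) ≠
    (y i, y ⟨(i.1 + 1) % n, Nat.mod_lt _ i.pos⟩)).card

/-- The `q`-ary entropy function `H_q(x)` (with `H_q(0) = 0`, since `logb q 0 = 0`). -/
noncomputable def qEntropy (q : ℕ) (x : ℝ) : ℝ :=
  x * Real.logb q (q - 1) - x * Real.logb q x - (1 - x) * Real.logb q (1 - x)

/-- `κ_sp(δ) = max_{0 ≤ θ/2 ≤ β ≤ θ ≤ δ} [β H_q((2β−θ)/β) + (1−β) H_q((θ−β)/(1−β))]`. -/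
noncomputable def kappaSP (q : ℕ) (δ : ℝ) : ℝ :=
  sSup {y : ℝ | ∃ β θ : ℝ, 0 ≤ θ / 2 ∧ θ / 2 ≤ β ∧ β ≤ θ ∧ θ ≤ δ ∧
    y = β * qEntropy q ((2 * β - θ) / β) + (1 - β) * qEntropy q ((θ - β) / (1 - β))}

namespace PairGV
open Finset

def wt {F : Type*} [DecidableEq F] [Zero F] {n : ℕ} (x : Fin n → F) : ℕ :=
  ∑ i, if x i ≠ 0 then 1 else 0

def asc {F : Type*} [DecidableEq F] [Zero F] {n : ℕ} (c : Prop) [Decidable c] (x : Fin n → F) : ℕ :=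
  match n with
  | 0 => 0
  | m+1 => (if c ∧ x 0 ≠ 0 then 1 else 0) +
      ∑ i : Fin m, if x i.castSucc = 0 ∧ x i.succ ≠ 0 then 1 else 0

theorem wt_cons {F : Type*} [DecidableEq F] [Zero F] {n : ℕ} (a : F) (x : Fin n → F) :
    wt (Fin.cons a x : Fin (n+1) → F) = (if a ≠ 0 then 1 else 0) + wt x := by
  simp [wt, Fin.sum_univ_succ]

theorem asc_cons {F : Type*} [DecidableEq F] [Zero F] {n : ℕ} (c : Prop) [Decidable c] (a : F)
    (x : Fin n → F) :
    asc c (Fin.cons a x : Fin (n+1) → F) = (if c ∧ a ≠ 0 then 1 else 0) + asc (a = 0) x := by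
  cases n with
  | zero => simp [asc]
  | succ m =>
    simp only [asc, Fin.cons_zero, Fin.sum_univ_succ, Fin.castSucc_zero, Fin.cons_succ,
      Fin.castSucc_succ]

def cnt (F : Type*) [DecidableEq F] [Zero F] [Fintype F] (n : ℕ) (c : Prop) [Decidable c]
    (w r : ℕ) : ℕ :=
  (univ.filter fun x : Fin n → F => wt x = w ∧ asc c x = r).card

theorem cnt_succ (F : Type*) [DecidableEq F] [Zero F] [Fintype F] (n : ℕ) (c : Prop) [Decidable c]
    (w r : ℕ) : cnt F (n+1) c w r = cnt F n True w r +
      (Fintype.card F - 1) * (univ.filter fun x : Fin n → F =>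
        1 + wt x = w ∧ (if c then 1 else 0) + asc False x = r).card := by
  have h : cnt F (n+1) c w r = ∑ a : F, (univ.filter fun x : Fin n → F =>
      (if a ≠ 0 then 1 else 0) + wt x = w ∧
       (if c ∧ a ≠ 0 then 1 else 0) + asc (a = 0) x = r).card := by
    unfold cnt
    simp only [card_filter]
    rw [← Fintype.sum_prod_type', ← (Fin.consEquiv (fun _ : Fin (n+1) => F)).sum_comp]
    apply Finset.sum_congr rfl
    rintro ⟨a, x⟩ -
    simp only [Fin.consEquiv, Equiv.coe_fn_mk, wt_cons, asc_cons]
  rw [h, ← Finset.add_sum_erase _ _ (mem_univ (0:F))]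
  congr 1
  · simp [cnt]
  · rw [Finset.sum_congr rfl (g := fun _ => (univ.filter fun x : Fin n → F =>
        1 + wt x = w ∧ (if c then 1 else 0) + asc False x = r).card)]
    · simp [Finset.card_erase_of_mem]
    · intro a ha
      have : a ≠ 0 := (mem_erase.1 ha).1
      simp [this]

theorem wt_le {F : Type*} [DecidableEq F] [Zero F] {n : ℕ} (x : Fin n → F) : wt x ≤ n := by
  unfold wt
  refine (Finset.sum_le_card_nsmul _ _ 1 ?_).trans (by simp)
  intro i _; split_ifs <;> simp

theorem cnt_bound (F : Type*) [DecidableEq F] [Zero F] [Fintype F] (n : ℕ) :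
    ∀ z w r : ℕ, z + w = n →
     (cnt F n False w r ≤ w.choose r * z.choose r * (Fintype.card F - 1) ^ w) ∧
     (cnt F n True 0 (r+1) = 0) ∧ (cnt F n True (w+1) 0 = 0) ∧ cnt F n True 0 0 ≤ 1 ∧
     (∀ w', w = w' + 1 → cnt F n True w (r+1) ≤ 
       w'.choose r * (z+1).choose (r+1) * (Fintype.card F - 1) ^ w) := by
  induction n with
  | zero =>
    intro z w r h
    obtain ⟨rfl, rfl⟩ : z = 0 ∧ w = 0 := by omega
    refine ⟨?_, ?_, ?_, ?_, ?_⟩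
    · rcases r with _ | r <;> simp [cnt, asc, wt]
    · simp [cnt, asc, wt]
    · simp [cnt, asc, wt]
    · simp [cnt, asc, wt]
    · simp
  | succ n ih =>
    intro z w r h
    refine ⟨?_, ?_, ?_, ?_, ?_⟩
    · rw [cnt_succ]
      simp only [if_false, zero_add]
      rcases w with _ | w
      · simp
        rcases z with _ | z
        · omega
        have := ih z 0 (r-1) (by omega)
        rcases r with _ | r
        · simpa using this.2.2.2.1
        · simpa using this.2.1
      · have e : ∀ x : Fin n → F, (1 + wt x = w + 1 ↔ wt x = w) := by intro x; omega
        simp only [e]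
        change _ + _ * cnt F n False w r ≤ _
        have h1 := (ih z w r (by omega)).1
        rcases r with _ | r
        · have h2 := (ih z w 0 (by omega)).2.2.1
          rw [h2, zero_add]
          refine (Nat.mul_le_mul_left _ h1).trans (le_of_eq ?_)
          simp; ring
        · have h2 : cnt F n True (w+1) (r+1) ≤ w.choose r * z.choose (r+1) *
              (Fintype.card F - 1) ^ (w+1) := by
            rcases z with _ | z
            · have : cnt F n True (w+1) (r+1) = 0 := by
                unfold cnt
                rw [card_eq_zero, filter_eq_empty_iff]
                rintro x - ⟨hx, -⟩
                have := wt_le x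
                omega
              rw [this]; exact Nat.zero_le _
            · exact (ih z (w+1) r (by omega)).2.2.2.2 w rfl
          refine (Nat.add_le_add h2 (Nat.mul_le_mul_left _ h1)).trans (le_of_eq ?_)
          rw [Nat.choose_succ_succ w r]; ring
    · rw [cnt_succ]
      simp
      exact (ih n 0 r (by omega)).2.1
    · rw [cnt_succ]
      rcases w with _ | w
      · have := (ih n 0 0 (by omega)).2.2.1
        simp [this]
      · have := (ih z w 0 (by omega))
        have h2 : cnt F n True (w+1+1) 0 = 0 := by
          rcases z with _ | z
          · unfold cnt
            rw [card_eq_zero, filter_eq_empty_iff]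
            rintro x - ⟨hx, -⟩
            have := wt_le x
            omega
          · exact (ih z (w+1) 0 (by omega)).2.2.1
        simp [h2]
    · rw [cnt_succ]
      simp
      exact (ih n 0 0 (by omega)).2.2.2.1
    · rintro w rfl
      rw [cnt_succ]
      have e : ∀ x : Fin n → F, (1 + wt x = w + 1 ↔ wt x = w) := by intro x; omega
      have e' : ∀ x : Fin n → F, (1 + asc False x = r + 1 ↔ asc False x = r) := by intro x; omega
      simp only [e, if_true, e']
      change _ + _ * cnt F n False w r ≤ _
      have h1 := (ih z w r (by omega)).1
      have h2 : cnt F n True (w+1) (r+1) ≤ w.choose r * z.choose (r+1) *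
              (Fintype.card F - 1) ^ (w+1) := by
        rcases z with _ | z
        · have : cnt F n True (w+1) (r+1) = 0 := by
            unfold cnt
            rw [card_eq_zero, filter_eq_empty_iff]
            rintro x - ⟨hx, -⟩
            have := wt_le x
            omega
          rw [this]; exact Nat.zero_le _
        · exact (ih z (w+1) r (by omega)).2.2.2.2 w rfl
      refine (Nat.add_le_add h2 (Nat.mul_le_mul_left _ h1)).trans (le_of_eq ?_)
      rw [Nat.choose_succ_succ z r]; ring

theorem wt_add_asc_le {F : Type*} [DecidableEq F] [AddGroup F] {n : ℕ} (x y : Fin n → F) :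
    wt (x - y) + asc False (x - y) ≤ pairDist x y := by
  cases n with
  | zero => simp [wt, asc]
  | succ m =>
    unfold wt asc pairDist
    rw [card_filter, Fin.sum_univ_castSucc, Fin.sum_univ_castSucc]
    simp only [false_and, if_false, zero_add]
    rw [add_right_comm, ← Finset.sum_add_distrib]
    apply Nat.add_le_add
    · apply Finset.sum_le_sum
      intro i _
      have : (⟨((i.castSucc : Fin (m+1)).1 + 1) % (m+1),
        Nat.mod_lt _ (i.castSucc : Fin (m+1)).pos⟩ : Fin (m+1)) = i.succ := by
        ext
        simp
      rw [this]
      simp only [Pi.sub_apply, ne_eq, sub_eq_zero, Prod.mk.injEq]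
      by_cases h1 : x i.castSucc = y i.castSucc <;> by_cases h2 : x i.succ = y i.succ <;>
        simp [h1, h2]
    · simp only [Pi.sub_apply, ne_eq, sub_eq_zero, Prod.mk.injEq]
      by_cases h1 : x (Fin.last m) = y (Fin.last m)
      · simp [h1]
      · simp [h1]

theorem log_choose_le (a k : ℕ) (h : k ≤ a) :
    Real.log (a.choose k) ≤ a * Real.binEntropy ((k:ℝ) / a) := by
  rcases Nat.eq_zero_or_pos a with rfl | ha
  · obtain rfl : k = 0 := by omega
    simp
  have haR : (0:ℝ) < a := by exact_mod_cast ha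
  set p : ℝ := (k:ℝ) / a with hp
  have hp0 : 0 ≤ p := by positivity
  have hp1 : p ≤ 1 := by
    rw [hp, div_le_one haR]; exact_mod_cast h
  have e1 : (a:ℝ) * p = k := by rw [hp]; field_simp
  have hle : p ^ k * (1-p) ^ (a-k) * (a.choose k : ℝ) ≤ 1 := by
    have := add_pow p (1-p) a
    rw [add_sub_cancel, one_pow] at this
    refine le_of_le_of_eq ?_ this.symm
    refine Finset.single_le_sum (f := fun m => p ^ m * (1-p) ^ (a-m) * (a.choose m : ℝ)) ?_ ?_
    · intro i _
      have : 0 ≤ 1 - p := by linarith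
      positivity
    · simp; omega
  have n1 : 0 < p ^ k := by
    rcases Nat.eq_zero_or_pos k with rfl | hk
    · simp
    · have : (0:ℝ) < k := by exact_mod_cast hk
      positivity
  have n2 : 0 < (1-p) ^ (a-k) := by
    rcases Nat.eq_zero_or_pos (a-k) with hk | hk
    · simp [hk]
    · have : p < 1 := by
        rw [hp, div_lt_one haR]; exact_mod_cast (by omega : k < a)
      have : 0 < 1 - p := by linarith
      positivity
  have n3 : (0:ℝ) < a.choose k := by exact_mod_cast Nat.choose_pos h
  have := Real.log_nonpos (by positivity) hle
  rw [Real.log_mul (by positivity) n3.ne', Real.log_mul n1.ne' n2.ne', Real.log_pow, Real.log_pow,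
    Nat.cast_sub h] at this
  rw [Real.binEntropy_eq_negMulLog_add_negMulLog_one_sub, Real.negMulLog, Real.negMulLog]
  have e2 : (a:ℝ) * (-p * Real.log p + -(1-p) * Real.log (1-p)) =
    -(k * Real.log p) - (a - k) * Real.log (1-p) := by
      rw [← e1]; ring
  rw [e2]; linarith

theorem qEntropy_eq (q : ℕ) (x : ℝ) :
    qEntropy q x = (x * Real.log (q-1) + Real.binEntropy x) / Real.log q := by
  rw [Real.binEntropy_eq_negMulLog_add_negMulLog_one_sub, Real.negMulLog, Real.negMulLog]
  unfold qEntropy Real.logb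
  ring

theorem qEntropy_le (q : ℕ) (hq : 2 ≤ q) (x : ℝ) (h1 : x ≤ 1) :
    qEntropy q x ≤ (Real.log (q-1) + Real.log 2) / Real.log q := by
  rw [qEntropy_eq]
  have h2 : (2:ℝ) ≤ q := by exact_mod_cast hq
  have : 0 < Real.log q := Real.log_pos (by linarith)
  have h3 : 0 ≤ Real.log ((q:ℝ)-1) := Real.log_nonneg (by linarith)
  have h4 : Real.binEntropy x ≤ Real.log 2 := Real.binEntropy_le_log_two
  gcongr
  nlinarith

theorem kappa_bdd (q : ℕ) (hq : 2 ≤ q) (δ : ℝ) (hδ : δ < 1) :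
    BddAbove {y : ℝ | ∃ β θ : ℝ, 0 ≤ θ / 2 ∧ θ / 2 ≤ β ∧ β ≤ θ ∧ θ ≤ δ ∧
    y = β * qEntropy q ((2 * β - θ) / β) + (1 - β) * qEntropy q ((θ - β) / (1 - β))} := by
  refine ⟨(Real.log (q-1) + Real.log 2) / Real.log q, ?_⟩
  rintro y ⟨β, θ, h0, h1, h2, h3, rfl⟩
  have a1 := qEntropy_le q hq ((2 * β - θ) / β) (div_le_one_of_le₀ (by linarith) (by linarith))
  have a2 := qEntropy_le q hq ((θ - β) / (1 - β)) (div_le_one_of_le₀ (by linarith) (by linarith))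
  nlinarith [mul_le_mul_of_nonneg_left a1 (by linarith : 0 ≤ β),
    mul_le_mul_of_nonneg_left a2 (by linarith : 0 ≤ 1 - β)]

theorem term_le (q : ℕ) (hq : 2 ≤ q) (δ : ℝ) (hδ : δ < 1) (n w r : ℕ) (hn : 0 < n)
    (h : ((w + r : ℕ) : ℝ) ≤ δ * n) :
    (w.choose r * (n-w).choose r * (q - 1) ^ w : ℕ) ≤ (q:ℝ) ^ (kappaSP q δ * n) := by
  have h2 : (2:ℝ) ≤ q := by exact_mod_cast hq
  have hq0 : (0:ℝ) < q := by linarith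
  have hlq : 0 < Real.log q := Real.log_pos (by linarith)
  have hnR : (0:ℝ) < n := by exact_mod_cast hn
  by_cases hrw : w < r
  · rw [Nat.choose_eq_zero_of_lt hrw]; simp; positivity
  push Not at hrw
  have hwn : w + r < n := by
    have : ((w + r : ℕ) : ℝ) < n := by nlinarith
    exact_mod_cast this
  have hwR : (w:ℝ) < n := by exact_mod_cast (by omega : w < n)
  have hrwR : (r:ℝ) ≤ w := by exact_mod_cast hrw
  have hr0 : (0:ℝ) ≤ r := by positivity
  have hw0 : (0:ℝ) ≤ w := by positivity
  push_cast at h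
  set y := ((w:ℝ)/n) * qEntropy q ((2 * ((w:ℝ)/n) - (w+r)/n) / ((w:ℝ)/n)) +
    (1 - (w:ℝ)/n) * qEntropy q (((w+r)/n - (w:ℝ)/n) / (1 - (w:ℝ)/n)) with hy
  have hyk : y ≤ kappaSP q δ := by
    apply le_csSup (kappa_bdd q hq δ hδ)
    refine ⟨(w:ℝ)/n, (w+r)/n, by positivity, ?_, ?_, ?_, hy⟩
    · rw [div_right_comm]; gcongr; linarith
    · gcongr; linarith
    · rw [div_le_iff₀ hnR]; exact h
  have hd : (0:ℝ) < n - w := by linarith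
  have ey : y * n * Real.log q = w * Real.log (q-1) + w * Real.binEntropy (r/w) +
      (n - w) * Real.binEntropy (r/(n-w)) := by
    have p2 : (((w+r)/n - (w:ℝ)/n) / (1 - (w:ℝ)/n)) = r / (n-w) := by
      field_simp; ring
    have p3 : (1 - (w:ℝ)/n) * n = n - w := by field_simp
    rcases Nat.eq_zero_or_pos w with h0 | hw
    · have hr : r = 0 := by omega
      subst h0; subst hr
      rw [hy]; simp [qEntropy]
    have hwp : (0:ℝ) < w := by exact_mod_cast hw
    have p1 : ((2 * ((w:ℝ)/n) - (w+r)/n) / ((w:ℝ)/n)) = 1 - r / w := by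
      field_simp; ring
    rw [hy, p1, p2, qEntropy_eq, qEntropy_eq, Real.binEntropy_one_sub]
    field_simp
    ring
  have c1 := log_choose_le w r hrw
  have c2 := log_choose_le (n-w) r (by omega)
  rw [Nat.cast_sub (by omega)] at c2
  have m1 : (0:ℝ) < w.choose r := by exact_mod_cast Nat.choose_pos hrw
  have m2 : (0:ℝ) < (n-w).choose r := by exact_mod_cast Nat.choose_pos (by omega)
  have m3 : (0:ℝ) < (q:ℝ) - 1 := by linarith
  have key : Real.log (w.choose r * (n-w).choose r * ((q:ℝ) - 1) ^ w) ≤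
      Real.log q * (kappaSP q δ * n) := by
    rw [Real.log_mul (by positivity) (by positivity), Real.log_mul m1.ne' m2.ne', Real.log_pow]
    have : y * n * Real.log q ≤ kappaSP q δ * n * Real.log q := by gcongr
    linarith
  rw [Real.rpow_def_of_pos hq0]
  push_cast [Nat.cast_sub (by omega : 1 ≤ q)]
  rw [← Real.log_le_iff_le_exp (by positivity)]
  exact key

theorem exists_code {F : Type*} [AddGroup F] [Fintype F] [DecidableEq F] (n : ℕ) (D : ℝ) :
    ∃ C : Finset (Fin n → F), (∀ x ∈ C, ∀ y ∈ C, x ≠ y → D ≤ (pairDist x y : ℝ)) ∧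
      (Fintype.card F) ^ n ≤ C.card *
        (1 + (univ.filter fun x : Fin n → F => ((wt x + asc False x : ℕ) : ℝ) < D).card) := by
  classical
  obtain ⟨C, hC⟩ := (Set.toFinite {C : Finset (Fin n → F) |
    ∀ x ∈ C, ∀ y ∈ C, x ≠ y → D ≤ (pairDist x y : ℝ)}).exists_maximal ⟨∅, by simp⟩
  refine ⟨C, hC.1, ?_⟩
  set B := (univ.filter fun x : Fin n → F => ((wt x + asc False x : ℕ) : ℝ) < D) with hB
  have symm : ∀ x y : Fin n → F, pairDist x y = pairDist y x := by
    intro x y; unfold pairDist; simp only [ne_comm]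
  have cover : (univ : Finset (Fin n → F)) ⊆
      C.biUnion (fun c => insert c (B.image (fun b => b + c))) := by
    intro y _
    rw [mem_biUnion]
    by_cases hy : y ∈ C
    · exact ⟨y, hy, by simp⟩
    by_contra hcon
    push Not at hcon
    apply hy
    have hfar : ∀ c ∈ C, D ≤ (pairDist y c : ℝ) := by
      intro c hc
      by_contra hlt
      push Not at hlt
      apply hcon c hc
      rw [mem_insert]; right
      rw [mem_image]
      refine ⟨y - c, ?_, by simp⟩
      rw [hB, mem_filter]
      refine ⟨mem_univ _, lt_of_le_of_lt ?_ hlt⟩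
      exact_mod_cast wt_add_asc_le y c
    have hins : insert y C ∈ {C : Finset (Fin n → F) |
        ∀ x ∈ C, ∀ y ∈ C, x ≠ y → D ≤ (pairDist x y : ℝ)} := by
      intro a ha b hb hab
      rw [mem_insert] at ha hb
      rcases ha with rfl | ha <;> rcases hb with rfl | hb
      · exact absurd rfl hab
      · exact hfar b hb
      · rw [symm]; exact hfar a ha
      · exact hC.1 a ha b hb hab
    exact hC.2 hins (subset_insert y C) (mem_insert_self y C)
  have := card_le_card cover
  rw [card_univ, Fintype.card_fun, Fintype.card_fin] at this
  refine this.trans (card_biUnion_le_card_mul _ _ _ ?_)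
  intro c _
  refine (card_insert_le _ _).trans ?_
  rw [add_comm]
  exact Nat.add_le_add_left card_image_le 1

theorem asc_le {F : Type*} [DecidableEq F] [Zero F] {n : ℕ} (x : Fin n → F) :
    asc False x ≤ n := by
  cases n with
  | zero => simp [asc]
  | succ m =>
    unfold asc
    have : (∑ i : Fin m, if x i.castSucc = 0 ∧ x i.succ ≠ 0 then 1 else 0 : ℕ) ≤ m := by
      refine (Finset.sum_le_card_nsmul _ _ 1 ?_).trans (by simp)
      intro i _; split_ifs <;> simp
    simp only [false_and, if_false]
    omega

theorem ball_le {F : Type*} [Zero F] [Fintype F] [DecidableEq F] (hq : 2 ≤ Fintype.card F)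
    (n : ℕ) (hn : 0 < n) (δ : ℝ) (hδ : δ < 1) :
    ((univ.filter fun x : Fin n → F => ((wt x + asc False x : ℕ) : ℝ) < δ * n).card : ℝ) ≤
      ((n:ℝ)+1)^2 * (Fintype.card F : ℝ) ^ (kappaSP (Fintype.card F) δ * n) := by
  classical
  set P := ((range (n+1)) ×ˢ (range (n+1))).filter
    (fun p : ℕ × ℕ => ((p.1 + p.2 : ℕ) : ℝ) ≤ δ * n) with hP
  have cover : (univ.filter fun x : Fin n → F => ((wt x + asc False x : ℕ) : ℝ) < δ * n) ⊆
     P.biUnion (fun p => univ.filter fun x : Fin n → F => wt x = p.1 ∧ asc False x = p.2) := by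
    intro x hx
    rw [mem_filter] at hx
    rw [mem_biUnion]
    refine ⟨(wt x, asc False x), ?_, by simp⟩
    rw [hP, mem_filter, mem_product, mem_range, mem_range]
    have := wt_le x
    have := asc_le x
    exact ⟨⟨by omega, by omega⟩, hx.2.le⟩
  have h1 := le_trans (card_le_card cover) card_biUnion_le
  have h2 : ((univ.filter fun x : Fin n → F => ((wt x + asc False x : ℕ) : ℝ) < δ * n).card : ℝ) ≤
      ∑ p ∈ P, (cnt F n False p.1 p.2 : ℝ) := by exact_mod_cast h1
  refine h2.trans ((sum_le_card_nsmul P _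
    ((Fintype.card F : ℝ) ^ (kappaSP (Fintype.card F) δ * n)) ?_).trans ?_)
  · rintro ⟨w, r⟩ hp
    rw [hP, mem_filter, mem_product, mem_range, mem_range] at hp
    refine le_trans ?_ (term_le _ hq δ hδ n w r hn hp.2)
    have := (cnt_bound F n (n-w) w r (by have := hp.1.1; simp at this; omega)).1
    exact_mod_cast this
  · rw [nsmul_eq_mul]
    gcongr
    have : P.card ≤ (n+1)*(n+1) := (card_filter_le _ _).trans (by simp)
    rw [sq]
    exact_mod_cast this

theorem final_asymp (q : ℝ) (ε : ℝ) (hε : 0 < ε) : ∃ n₀ : ℕ, 0 < n₀ ∧ ∀ n : ℕ, n₀ ≤ n →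
    Real.logb q (1 + ((n:ℝ)+1)^2) / n ≤ ε := by
  have h : Filter.Tendsto (fun n : ℕ => Real.logb q (1 + ((n:ℝ)+1)^2) / n) Filter.atTop (nhds 0) := by
    have h1 : (fun x : ℝ => Real.log x) =o[Filter.atTop] (fun x : ℝ => x ^ (1/3 : ℝ)) :=
      isLittleO_log_rpow_atTop (by norm_num)
    have h0 : Filter.Tendsto (fun n : ℕ => Real.log ((n:ℝ)) / (n:ℝ)) Filter.atTop (nhds 0) := by
      have := Real.isLittleO_log_id_atTop.tendsto_div_nhds_zero
      exact this.comp tendsto_natCast_atTop_atTop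
    have hinv : Filter.Tendsto (fun n : ℕ => (1:ℝ) / (n:ℝ)) Filter.atTop (nhds 0) :=
      tendsto_one_div_atTop_nhds_zero_nat
    have hU : Filter.Tendsto (fun n : ℕ => Real.log 5 * ((1:ℝ) / n) + 2 * (Real.log n / n))
        Filter.atTop (nhds 0) := by
      simpa using (hinv.const_mul (Real.log 5)).add (h0.const_mul 2)
    have hL : Filter.Tendsto (fun n : ℕ => Real.log (1 + ((n:ℝ)+1)^2) / n)
        Filter.atTop (nhds 0) := by
      refine squeeze_zero' ?_ ?_ hU
      · filter_upwards with n
        have : 0 ≤ Real.log (1 + ((n:ℝ)+1)^2) := Real.log_nonneg (by nlinarith [sq_nonneg ((n:ℝ)+1)])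
        positivity
      · filter_upwards [Filter.eventually_ge_atTop 1] with n hn
        have hn' : (1:ℝ) ≤ n := by exact_mod_cast hn
        have : Real.log (1 + ((n:ℝ)+1)^2) ≤ Real.log 5 + 2 * Real.log n := by
          rw [show (2:ℝ) * Real.log n = Real.log ((n:ℝ)^2) by rw [Real.log_pow]; norm_num,
            ← Real.log_mul (by norm_num) (by positivity)]
          apply Real.log_le_log (by positivity)
          nlinarith
        rw [show Real.log 5 * ((1:ℝ) / n) + 2 * (Real.log n / n) =
          (Real.log 5 + 2 * Real.log n) / n by ring]
        gcongr
    have := hL.div_const (Real.log q)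
    rw [zero_div] at this
    refine this.congr ?_
    intro n
    unfold Real.logb
    ring
  obtain ⟨N, hN⟩ := Filter.eventually_atTop.1 (h.eventually (ge_mem_nhds hε))
  exact ⟨N+1, by omega, fun n hn => hN n (by omega)⟩

theorem kappa_nonneg (q : ℕ) (hq : 2 ≤ q) (δ : ℝ) (h0 : 0 < δ) (hδ : δ < 1) :
    0 ≤ kappaSP q δ := by
  apply le_csSup (kappa_bdd q hq δ hδ)
  exact ⟨0, 0, by simp, by simp, by simp, h0.le, by simp [qEntropy]⟩

end PairGV

/-- (Asymptotic Gilbert–Varshamov bound for symbol-pair codes) For every finite field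
`F` of size `q`, every real `δ ∈ (0,1)` with `κ_sp(δ) < 1`, and every `ε > 0`, for all
sufficiently large `n` there exists a code `C ⊆ F_q^n` with minimum pair distance at
least `δn` and rate `(log_q |C|)/n ≥ 1 − κ_sp(δ) − ε`. -/
theorem gilbert_varshamov_pair {F : Type*} [Field F] [Fintype F] [DecidableEq F]
    {q : ℕ} (hq : Fintype.card F = q) (δ ε : ℝ)
    (hδ0 : 0 < δ) (hδ1 : δ < 1) (hκ : kappaSP q δ < 1) (hε : 0 < ε) :
    ∃ n₀ : ℕ, ∀ n : ℕ, n₀ ≤ n → ∃ C : Finset (Fin n → F),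
      (∀ x ∈ C, ∀ y ∈ C, x ≠ y → δ * n ≤ (pairDist x y : ℝ)) ∧
      1 - kappaSP q δ - ε ≤ Real.logb q C.card / n := by
  subst hq
  have hq2 : 2 ≤ Fintype.card F := Fintype.one_lt_card
  obtain ⟨n₀, hn₀, H⟩ := PairGV.final_asymp (Fintype.card F : ℝ) ε hε
  refine ⟨n₀, fun n hn => ?_⟩
  obtain ⟨C, hC1, hC2⟩ := PairGV.exists_code (F := F) n (δ * n)
  refine ⟨C, hC1, ?_⟩
  have hnpos : 0 < n := by omega
  have hnR : (0:ℝ) < n := by exact_mod_cast hnpos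
  have hB := PairGV.ball_le hq2 n hnpos δ hδ1
  have hk := PairGV.kappa_nonneg (Fintype.card F) hq2 δ hδ0 hδ1
  have h2 : (2:ℝ) ≤ (Fintype.card F : ℝ) := by exact_mod_cast hq2
  have hH := H n hn
  set q : ℝ := (Fintype.card F : ℝ) with hq
  set κ := kappaSP (Fintype.card F) δ with hκ'
  have hq1 : 1 < q := by linarith
  have hq0 : 0 < q := by linarith
  have hC2R : q ^ n ≤ (C.card : ℝ) * ((1 + ((n:ℝ)+1)^2) * q ^ (κ * n)) := by
    have h3 : q ^ n ≤ (C.card : ℝ) * (1 + ((Finset.univ.filter fun x : Fin n → F =>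
        ((PairGV.wt x + PairGV.asc False x : ℕ) : ℝ) < δ * n).card : ℝ)) := by
      rw [hq]; exact_mod_cast hC2
    refine h3.trans ?_
    have h4 : 1 ≤ q ^ (κ * n) := Real.one_le_rpow hq1.le (by positivity)
    gcongr
    linarith
  have hCpos : (0:ℝ) < C.card := by
    by_contra hneg
    have h0 : (C.card : ℝ) = 0 := le_antisymm (not_lt.1 hneg) (by positivity)
    rw [h0, zero_mul] at hC2R
    have : 0 < q ^ n := by positivity
    linarith
  have h5 := Real.logb_le_logb_of_le hq1 (by positivity) hC2R
  rw [Real.logb_mul hCpos.ne' (by positivity), Real.logb_mul (by positivity) (by positivity),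
    Real.logb_rpow hq0 hq1.ne', Real.logb_pow, Real.logb_self_eq_one hq1] at h5
  rw [div_le_iff₀ hnR] at hH
  rw [le_div_iff₀ hnR]
  linarith
end

section
/- For every prime power q and every real δ ∈ (0,1), the size of the symbol-pair ball of radius ⌊δn⌋ satisfies lim_{n→∞} (log_q |B_P(0, ⌊δn⌋)|)/n = κ_sp(δ), where 0 denotes the all-zero vector of F_q^n (the size of B_P(x, r) does not depend on the center x, since d_P is translation invariant). -/
/-- The symbol-pair ball of radius `r` centered at `x`. -/
def pairBall {F : Type*} [Fintype F] [DecidableEq F] {n : ℕ}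
    (x : Fin n → F) (r : ℕ) : Finset (Fin n → F) :=
  Finset.univ.filter fun y => pairDist x y ≤ r

open Finset Real Filter Topology

namespace PB

set_option linter.unusedSectionVars false

section Comb
variable {F : Type*} [Field F] [Fintype F] [DecidableEq F]

def wt {n : ℕ} (x : Fin n → F) : ℕ := ∑ i, if x i ≠ 0 then 1 else 0

def asc {n : ℕ} (p : F) (x : Fin n → F) : ℕ :=
  ∑ i : Fin n, if (Fin.cons p x : Fin (n+1) → F) i.castSucc = 0 ∧ x i ≠ 0 then 1 else 0

lemma wt_le {n : ℕ} (x : Fin n → F) : wt x ≤ n := by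
  unfold wt
  calc _ ≤ ∑ i : Fin n, 1 := Finset.sum_le_sum (fun i _ => by split_ifs <;> simp)
    _ = n := by simp

lemma wt_cons {n : ℕ} (a : F) (y : Fin n → F) :
    wt (Fin.cons a y : Fin (n+1) → F) = (if a ≠ 0 then 1 else 0) + wt y := by
  simp [wt, Fin.sum_univ_succ]

lemma asc_cons {n : ℕ} (p a : F) (y : Fin n → F) :
    asc p (Fin.cons a y : Fin (n+1) → F) = (if p = 0 ∧ a ≠ 0 then 1 else 0) + asc a y := by
  simp only [asc, Fin.sum_univ_succ, Fin.castSucc_zero, Fin.cons_zero, Fin.cons_succ,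
    ← Fin.succ_castSucc]

def N (n : ℕ) (p : F) (w L : ℕ) : ℕ :=
  (univ.filter fun x : Fin n → F => wt x = w ∧ asc p x = L).card

lemma N_big (n : ℕ) (p : F) (w L : ℕ) (h : n < w) : N n p w L = 0 := by
  unfold N
  rw [Finset.card_eq_zero, Finset.filter_eq_empty_iff]
  rintro x - ⟨h1, -⟩
  have := wt_le x
  omega

lemma N_succ (n : ℕ) (p : F) (w L : ℕ) :
    N (n+1) p w L = ∑ a : F, (univ.filter fun y : Fin n → F =>
      (if a ≠ 0 then 1 else 0) + wt y = w ∧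
      (if p = 0 ∧ a ≠ 0 then 1 else 0) + asc a y = L).card := by
  unfold N
  simp only [Finset.card_filter]
  rw [← (Fin.consEquiv (fun _ : Fin (n+1) => F)).sum_comp, Fintype.sum_prod_type]
  refine Finset.sum_congr rfl fun a _ => Finset.sum_congr rfl fun y _ => ?_
  have h : (Fin.consEquiv (fun _ : Fin (n+1) => F)) (a, y) = (Fin.cons a y : Fin (n+1) → F) := rfl
  rw [h, wt_cons, asc_cons]

lemma sum_split (f : F → ℕ) (c : ℕ) (h : ∀ a, a ≠ 0 → f a = c) :
    ∑ a, f a = f 0 + (Fintype.card F - 1) * c := by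
  rw [← Finset.add_sum_erase _ _ (mem_univ (0:F))]
  congr 1
  rw [Finset.sum_congr rfl (fun a ha => h a (Finset.ne_of_mem_erase ha))]
  simp [Finset.card_erase_of_mem]

lemma N_main (n : ℕ) :
    (∀ p : F, p ≠ 0 → ∀ w z L, w + z = n →
      N n p w L = (Fintype.card F - 1)^w * (w.choose L * z.choose L)) ∧
    (∀ z, z = n → ∀ L, N n (0:F) 0 L = if L = 0 then 1 else 0) ∧
    (∀ w z, w + 1 + z = n → N n (0:F) (w+1) 0 = 0) ∧
    (∀ w z L, w + 1 + z = n → N n (0:F) (w+1) (L+1) =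
      (Fintype.card F - 1)^(w+1) * (w.choose L * (z+1).choose (L+1))) := by
  induction n with
  | zero =>
    refine ⟨?_, ?_, ?_, ?_⟩
    · intro p hp w z L h
      obtain ⟨rfl, rfl⟩ : w = 0 ∧ z = 0 := by omega
      cases L <;> simp [N, wt, asc]
    · intro z hz L
      cases L <;> simp [N, wt, asc]
    · intros; omega
    · intros; omega
  | succ n ih =>
    obtain ⟨h1, h2, h3, h4⟩ := ih
    have s1 : ∀ p : F, p ≠ 0 → ∀ L, N (n+1) p 0 L = N n (0:F) 0 L := by
      intro p hp L
      rw [N_succ, sum_split _ 0]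
      · simp [N]
      · intro a ha; simp [ha]
    have s2 : ∀ p : F, p ≠ 0 → ∀ w L c, (∀ a : F, a ≠ 0 → N n a w L = c) →
        N (n+1) p (w+1) L = N n (0:F) (w+1) L + (Fintype.card F - 1) * c := by
      intro p hp w L c hc
      rw [N_succ, sum_split _ c]
      · simp [N]
      · intro a ha; rw [← hc a ha]; simp [ha, hp, N, add_comm 1]
    have s3 : ∀ L, N (n+1) (0:F) 0 L = N n (0:F) 0 L := by
      intro L
      rw [N_succ, sum_split _ 0]
      · simp [N]
      · intro a ha; simp [ha]
    have s4 : ∀ w, N (n+1) (0:F) (w+1) 0 = N n (0:F) (w+1) 0 := by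
      intro w
      rw [N_succ, sum_split _ 0]
      · simp [N]
      · intro a ha; simp [ha]
    have s5 : ∀ w L c, (∀ a : F, a ≠ 0 → N n a w L = c) →
        N (n+1) (0:F) (w+1) (L+1) = N n (0:F) (w+1) (L+1) + (Fintype.card F - 1) * c := by
      intro w L c hc
      rw [N_succ, sum_split _ c]
      · simp [N]
      · intro a ha; rw [← hc a ha]; simp [ha, N, add_comm 1]
    refine ⟨?_, ?_, ?_, ?_⟩
    · intro p hp w z L h
      cases w with
      | zero =>
        rw [s1 p hp, h2 n rfl]
        cases L <;> simp
      | succ w =>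
        rw [s2 p hp w L _ (fun a ha => h1 a ha w z L (by omega))]
        cases z with
        | zero =>
          rw [N_big _ _ _ _ (by omega)]
          cases L <;> simp [pow_succ]; ring
        | succ z =>
          cases L with
          | zero => rw [h3 w z (by omega)]; simp [pow_succ]; ring
          | succ L =>
            rw [h4 w z L (by omega), Nat.choose_succ_succ w L]; ring
    · intro z hz L
      rw [s3, h2 n rfl]
    · intro w z h
      rw [s4]
      cases z with
      | zero => exact N_big _ _ _ _ (by omega)
      | succ z => exact h3 w z (by omega)
    · intro w z L h
      rw [s5 w L _ (fun a ha => h1 a ha w z L (by omega))]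
      cases z with
      | zero =>
        rw [N_big _ _ _ _ (by omega), Nat.choose_succ_succ 0 L]
        simp; ring
      | succ z =>
        rw [h4 w z L (by omega), Nat.choose_succ_succ (z+1) L]; ring

lemma N_one (n w L : ℕ) (h : w ≤ n) :
    N n (1:F) w L = (Fintype.card F - 1)^w * (w.choose L * (n-w).choose L) :=
  (N_main n).1 1 one_ne_zero w (n-w) L (by omega)

lemma pairDist_bounds {n : ℕ} (x : Fin n → F) :
    wt x + asc 1 x ≤ pairDist 0 x ∧ pairDist 0 x ≤ wt x + asc 1 x + 1 := by
  cases n with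
  | zero => simp [wt, asc, pairDist]
  | succ n =>
    have e : pairDist 0 x = wt x + ((∑ i : Fin n, if x i.castSucc = 0 ∧ x i.succ ≠ 0 then 1 else 0)
        + if x (Fin.last n) = 0 ∧ x 0 ≠ 0 then 1 else 0) := by
      have e1 : pairDist 0 x = wt x + ∑ i : Fin (n+1),
        if x i = 0 ∧ x ⟨(i.1 + 1) % (n+1), Nat.mod_lt _ i.pos⟩ ≠ 0 then 1 else 0 := by
        unfold pairDist wt
        rw [Finset.card_filter, ← Finset.sum_add_distrib]
        refine Finset.sum_congr rfl fun i _ => ?_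
        by_cases h : x i = 0 <;>
        by_cases h' : x ⟨(i.1 + 1) % (n+1), Nat.mod_lt _ i.pos⟩ = 0 <;>
        simp [h, h', eq_comm (a := (0:F))]
      rw [e1, Fin.sum_univ_castSucc]
      congr 2
      · refine Finset.sum_congr rfl fun i _ => ?_
        have : (⟨((Fin.castSucc i).1 + 1) % (n+1), Nat.mod_lt _ (Fin.castSucc i).pos⟩ : Fin (n+1))
          = i.succ := by
          ext; simp [Nat.mod_eq_of_lt]
        rw [this]
      · have : (⟨((Fin.last n).1 + 1) % (n+1), Nat.mod_lt _ (Fin.last n).pos⟩ : Fin (n+1))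
          = 0 := by
          ext; simp
        rw [this]
    have e2 : asc 1 x = ∑ i : Fin n, if x i.castSucc = 0 ∧ x i.succ ≠ 0 then 1 else 0 := by
      unfold asc
      rw [Fin.sum_univ_succ]
      simp [← Fin.succ_castSucc]
    rw [e, e2]
    split_ifs <;> omega

lemma ball_lower (n w L r : ℕ) (hw : w ≤ n) (h : w + L + 1 ≤ r) :
    (Fintype.card F - 1)^w * (w.choose L * (n-w).choose L) ≤ (pairBall (0 : Fin n → F) r).card := by
  rw [← N_one (F := F) n w L hw]
  unfold N pairBall
  apply Finset.card_le_card
  intro x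
  simp only [mem_filter, mem_univ, true_and]
  rintro ⟨h1, h2⟩
  have := (pairDist_bounds x).2
  omega

lemma ball_upper (n r B : ℕ) (hr : r ≤ n)
    (h : ∀ w L, L ≤ w → w + L ≤ r →
      (Fintype.card F - 1)^w * (w.choose L * (n-w).choose L) ≤ B) :
    (pairBall (0 : Fin n → F) r).card ≤ (n+1) * (n+1) * B := by
  have key : (pairBall (0 : Fin n → F) r).card ≤
      (Finset.range (n+1) ×ˢ Finset.range (n+1)).card * B := by
    rw [mul_comm]
    apply Finset.card_le_mul_card_image_of_maps_to (f := fun x => (wt x, asc 1 x))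
    · intro x hx
      simp only [pairBall, mem_filter, mem_univ, true_and] at hx
      have := (pairDist_bounds x).1
      simp only [coe_product, Set.mem_prod, mem_coe, Finset.mem_range, mem_product]
      omega
    · rintro ⟨w, L⟩ -
      by_cases hh : w + L ≤ r
      · have hle : ((pairBall (0 : Fin n → F) r).filter
            fun x => (wt x, asc 1 x) = (w, L)).card ≤ N n (1:F) w L := by
          unfold N
          apply Finset.card_le_card
          intro x
          simp only [mem_filter, mem_univ, true_and, Prod.mk.injEq]
          tauto
        refine hle.trans ?_
        rw [N_one n w L (by omega)]
        by_cases hl : L ≤ w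
        · exact h w L hl hh
        · rw [Nat.choose_eq_zero_of_lt (by omega : w < L)]; simp
      · convert Nat.zero_le B
        rw [Finset.card_eq_zero, Finset.filter_eq_empty_iff]
        intro x hx hx'
        simp only [pairBall, mem_filter, mem_univ, true_and] at hx
        have := (pairDist_bounds x).1
        simp only [Prod.mk.injEq] at hx'
        omega
  simpa using key

end Comb

noncomputable def E (a b : ℝ) : ℝ := negMulLog b + negMulLog (a - b) - negMulLog a

lemma E_mul (n a b : ℝ) : E (n*a) (n*b) = n * E a b := by
  unfold E
  rw [← mul_sub, negMulLog_mul, negMulLog_mul, negMulLog_mul]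
  ring

lemma choose_le_pow (b c : ℕ) : (b+c).choose b * (b^b * c^c) ≤ (b+c)^(b+c) := by
  rw [add_pow]
  have := Finset.single_le_sum (f := fun k => b^k * c^(b+c-k) * (b+c).choose k)
    (s := Finset.range (b+c+1)) (fun _ _ => Nat.zero_le _) (Finset.mem_range.2 (by omega : b < b+c+1))
  simp only [Nat.add_sub_cancel_left] at this
  calc _ = b^b * c^c * (b+c).choose b := by ring
    _ ≤ _ := by simpa using this

lemma mode (b k : ℕ) : b^k * b.factorial ≤ b^b * k.factorial := by
  rcases le_total b k with h | h
  · have := Nat.factorial_mul_pow_sub_le_factorial h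
    calc b^k * b.factorial = b^b * (b.factorial * b^(k-b)) := by
          rw [← Nat.add_sub_cancel' h, pow_add]; simp; ring
      _ ≤ _ := Nat.mul_le_mul_left _ this
  · obtain ⟨j, rfl⟩ := Nat.exists_eq_add_of_le h
    have : (k+j).factorial ≤ k.factorial * (k+j)^j := by
      rw [← Nat.factorial_mul_ascFactorial]
      exact Nat.mul_le_mul_left _ (Nat.ascFactorial_le_pow_add k j)
    calc (k+j)^k * (k+j).factorial ≤ (k+j)^k * (k.factorial * (k+j)^j) :=
          Nat.mul_le_mul_left _ this
      _ = _ := by rw [pow_add]; ring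

lemma pow_le_choose (b c : ℕ) :
    (b+c)^(b+c) ≤ (b+c+1) * ((b+c).choose b * (b^b * c^c)) := by
  rw [add_pow]
  refine (Finset.sum_le_card_nsmul _ _ ((b+c).choose b * (b^b * c^c)) ?_).trans (by simp)
  intro k hk
  have hk : k ≤ b + c := by simpa [Nat.lt_succ_iff] using hk
  obtain ⟨j, hj⟩ := Nat.exists_eq_add_of_le hk
  rw [hj, Nat.add_sub_cancel_left]
  have e1 : (k+j).choose k * (k.factorial * j.factorial) = (k+j).factorial := by
    rw [← mul_assoc]; exact Nat.choose_symm_add ▸ Nat.add_choose_mul_factorial_mul_factorial k j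
  have e2 : (k+j).choose b * (b.factorial * c.factorial) = (k+j).factorial := by
    rw [← mul_assoc, ← hj]; exact Nat.choose_symm_add ▸ Nat.add_choose_mul_factorial_mul_factorial b c
  have m := Nat.mul_le_mul (mode b k) (mode c j)
  have hpos : 0 < (k.factorial * j.factorial) * (b.factorial * c.factorial) := by positivity
  refine Nat.le_of_mul_le_mul_right ?_ hpos
  calc b ^ k * c ^ j * (k + j).choose k * (k.factorial * j.factorial * (b.factorial * c.factorial))
      = (k+j).factorial * (b^k * b.factorial * (c^j * c.factorial)) := by rw [← e1]; ring
    _ ≤ (k+j).factorial * (b^b * k.factorial * (c^c * j.factorial)) := Nat.mul_le_mul_left _ m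
    _ = _ := by rw [← e2]; ring

lemma log_self_pow (b : ℕ) : Real.log ((b:ℝ)^b) = - negMulLog b := by
  rw [Real.log_pow, negMulLog]; ring

lemma spos (b : ℕ) : (0:ℝ) < (b:ℝ)^b := by
  rcases Nat.eq_zero_or_pos b with rfl | h
  · simp
  · positivity

lemma log_choose (a b : ℕ) (h : b ≤ a) :
    Real.log (a.choose b) ≤ E a b ∧ E a b ≤ Real.log (a+1) + Real.log (a.choose b) := by
  obtain ⟨c, rfl⟩ := Nat.exists_eq_add_of_le h
  have hc : (0:ℝ) < (b+c).choose b := by exact_mod_cast Nat.choose_pos h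
  have h1 : ((b+c).choose b : ℝ) * ((b:ℝ)^b * (c:ℝ)^c) ≤ ((b+c : ℕ):ℝ)^(b+c) := by
    exact_mod_cast choose_le_pow b c
  have h2 : ((b+c : ℕ):ℝ)^(b+c) ≤ (((b+c : ℕ):ℝ)+1) * (((b+c).choose b : ℝ) * ((b:ℝ)^b * (c:ℝ)^c)) := by
    exact_mod_cast pow_le_choose b c
  have pb := spos b
  have pc := spos c
  have pbc := spos (b+c)
  have l1 := Real.log_le_log (by positivity) h1
  have l2 := Real.log_le_log pbc h2
  rw [Real.log_mul hc.ne' (by positivity), Real.log_mul pb.ne' pc.ne', log_self_pow, log_self_pow,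
    log_self_pow] at l1
  rw [Real.log_mul (by positivity) (by positivity), Real.log_mul hc.ne' (by positivity),
    Real.log_mul pb.ne' pc.ne', log_self_pow, log_self_pow, log_self_pow] at l2
  have e : ((b+c:ℕ):ℝ) - b = c := by push_cast; ring
  unfold E
  rw [e]
  constructor <;> linarith

noncomputable def G (q : ℕ) (p : ℝ × ℝ) : ℝ :=
  p.1 * Real.log (q - 1) + E p.1 p.2 + E (1 - p.1) p.2

lemma G_cont (q : ℕ) : Continuous (G q) := by
  unfold G E
  have := continuous_negMulLog
  fun_prop

lemma logT (q n w L : ℕ) (hq : 2 ≤ q) (hn : 0 < n) (hw : w ≤ n) (hL : L ≤ w) (hL' : L ≤ n - w) :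
    Real.log (((q-1)^w * (w.choose L * (n-w).choose L) : ℕ):ℝ) ≤ n * G q ((w:ℝ)/n, (L:ℝ)/n) ∧
    n * G q ((w:ℝ)/n, (L:ℝ)/n) ≤
      2 * Real.log (n+1) + Real.log (((q-1)^w * (w.choose L * (n-w).choose L) : ℕ):ℝ) := by
  have hn' : (n:ℝ) ≠ 0 := by positivity
  have e : n * G q ((w:ℝ)/n, (L:ℝ)/n) = w * Real.log (q-1) + E w L + E ((n-w:ℕ):ℝ) L := by
    unfold G
    simp only
    rw [mul_add, mul_add, ← E_mul, ← E_mul, mul_sub, mul_one, mul_div_cancel₀ _ hn',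
      mul_div_cancel₀ _ hn', Nat.cast_sub hw, ← mul_assoc, mul_div_cancel₀ _ hn']
  have hq1 : (0:ℝ) < (q:ℝ) - 1 := by
    have : (2:ℝ) ≤ q := by exact_mod_cast hq
    linarith
  have c1 : (0:ℝ) < w.choose L := by exact_mod_cast Nat.choose_pos hL
  have c2 : (0:ℝ) < (n-w).choose L := by exact_mod_cast Nat.choose_pos hL'
  rw [e]
  push_cast [Nat.cast_sub (by omega : 1 ≤ q)]
  rw [Real.log_mul (by positivity) (by positivity), Real.log_mul c1.ne' c2.ne', Real.log_pow]
  obtain ⟨a1, a2⟩ := log_choose w L hL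
  obtain ⟨b1, b2⟩ := log_choose (n-w) L hL'
  have d1 : Real.log ((w:ℝ)+1) ≤ Real.log (n+1) := by
    apply Real.log_le_log (by positivity)
    have : (w:ℝ) ≤ n := by exact_mod_cast hw
    linarith
  have d2 : Real.log (((n-w:ℕ):ℝ)+1) ≤ Real.log (n+1) := by
    apply Real.log_le_log (by positivity)
    have : ((n-w:ℕ):ℝ) ≤ n := by exact_mod_cast Nat.sub_le n w
    linarith
  rw [Nat.cast_sub hw] at *
  constructor <;> linarith

lemma mul_log_div (x b : ℝ) (hb : b ≠ 0) :
    b * (x / b * Real.log (x / b)) = x * Real.log x - x * Real.log b := by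
  rcases eq_or_ne x 0 with rfl | hx
  · simp
  · rw [Real.log_div hx hb]; field_simp

lemma ent_scale (q : ℕ) (x b : ℝ) (hb : b ≠ 0) :
    b * qEntropy q (x / b) = (x * Real.log (q-1) + E b x) / Real.log q := by
  have h1 := mul_log_div x b hb
  have h2 := mul_log_div (b - x) b hb
  have e : 1 - x / b = (b - x) / b := by field_simp
  have e3 : b * (x / b) = x := by field_simp
  unfold qEntropy E Real.logb negMulLog
  rw [e]
  have : b * (x / b * (Real.log (q-1) / Real.log q) - x / b * (Real.log (x/b) / Real.log q)
      - (b-x)/b * (Real.log ((b-x)/b) / Real.log q)) =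
      ((b * (x/b)) * Real.log (q-1) - b * (x/b * Real.log (x/b))
        - b * ((b-x)/b * Real.log ((b-x)/b))) / Real.log q := by ring
  rw [this, h1, h2, e3]
  ring

lemma val_eq (q : ℕ) (β θ : ℝ) (h1 : θ/2 ≤ β) (h0 : 0 ≤ θ / 2) (hβ : β ≤ θ) (hθ : θ < 1) :
    β * qEntropy q ((2 * β - θ) / β) + (1 - β) * qEntropy q ((θ - β) / (1 - β)) =
    G q (β, θ - β) / Real.log q := by
  rw [ent_scale q _ (1-β) (by linarith)]
  rcases eq_or_ne β 0 with rfl | hb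
  · have : θ = 0 := by linarith
    subst this
    simp [G, E]
  · rw [ent_scale q _ β hb]
    unfold G E
    simp only
    have : β - (2*β-θ) = θ - β := by ring
    have h' : β - (θ - β) = 2*β-θ := by ring
    rw [this, h']
    ring

def K (δ : ℝ) : Set (ℝ × ℝ) := {p | 0 ≤ p.2 ∧ p.2 ≤ p.1 ∧ p.1 + p.2 ≤ δ}

lemma kappa_eq (q : ℕ) (δ : ℝ) (hδ1 : δ < 1) :
    kappaSP q δ = sSup ((fun p => G q p / Real.log q) '' K δ) := by
  unfold kappaSP
  congr 1
  ext y
  simp only [Set.mem_setOf_eq, Set.mem_image, Prod.exists, K]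
  constructor
  · rintro ⟨β, θ, h0, h1, h2, h3, rfl⟩
    refine ⟨β, θ - β, ⟨by linarith, by linarith, by linarith⟩, ?_⟩
    rw [val_eq q β θ h1 h0 h2 (by linarith)]
  · rintro ⟨b, t, ⟨h0, h1, h2⟩, rfl⟩
    refine ⟨b, b + t, by linarith, by linarith, by linarith, by linarith, ?_⟩
    rw [val_eq q b (b+t) (by linarith) (by linarith) (by linarith) (by linarith)]
    simp

lemma K_compact (δ : ℝ) : IsCompact (K δ) := by
  apply IsCompact.of_isClosed_subset (isCompact_Icc (a := ((0:ℝ),(0:ℝ))) (b := (δ, δ)))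
  · unfold K
    simp only [Set.ofPred_and]
    refine IsClosed.inter ?_ (IsClosed.inter ?_ ?_) <;>
    · apply isClosed_le <;> fun_prop
  · rintro ⟨a, b⟩ ⟨h0, h1, h2⟩
    simp only at h0 h1 h2
    simp only [Set.mem_Icc, Prod.mk_le_mk]
    exact ⟨⟨by linarith, by linarith⟩, ⟨by linarith, by linarith⟩⟩

lemma K_bdd (q : ℕ) (δ : ℝ) : BddAbove ((fun p => G q p / Real.log q) '' K δ) :=
  (K_compact δ).bddAbove_image ((G_cont q).div_const _).continuousOn

lemma log_lim : Tendsto (fun n : ℕ => 2 * Real.log ((n:ℝ)+1) / n) atTop (𝓝 0) := by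
  have h1 : Tendsto (fun x : ℝ => Real.log x / x) atTop (𝓝 0) := by
    simpa using Real.isLittleO_log_id_atTop.tendsto_div_nhds_zero
  have h2 : Tendsto (fun n : ℕ => ((n+1 : ℕ):ℝ)) atTop atTop :=
    tendsto_natCast_atTop_atTop.comp (tendsto_add_atTop_nat 1)
  have h3 := h1.comp h2
  have h4 : Tendsto (fun n : ℕ => (1:ℝ) + 1 / (n:ℝ)) atTop (𝓝 (1 + 0)) :=
    tendsto_const_nhds.add tendsto_one_div_atTop_nhds_zero_nat
  have h5 := (h3.mul h4).const_mul 2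
  simp only [zero_mul, mul_zero] at h5
  refine h5.congr' ?_
  filter_upwards [eventually_gt_atTop 0] with n hn
  have : (n:ℝ) ≠ 0 := by positivity
  simp only [Function.comp]
  push_cast
  field_simp

lemma floor_lim (b : ℝ) (hb : 0 ≤ b) :
    Tendsto (fun n : ℕ => ((⌊b * n⌋₊ - 1 : ℕ) : ℝ) / n) atTop (𝓝 b) := by
  have h0 : Tendsto (fun n : ℕ => b - 2 / (n:ℝ)) atTop (𝓝 (b - 0)) :=
    tendsto_const_nhds.sub (tendsto_const_div_atTop_nhds_zero_nat 2)
  rw [sub_zero] at h0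
  refine tendsto_of_tendsto_of_tendsto_of_le_of_le' h0 tendsto_const_nhds ?_ ?_
  · filter_upwards [eventually_gt_atTop 0] with n hn
    have hn' : (0:ℝ) < n := by positivity
    rw [le_div_iff₀ hn', sub_mul, div_mul_cancel₀ _ hn'.ne']
    have h1 := Nat.lt_floor_add_one (b * n)
    have h2 : ⌊b * n⌋₊ ≤ (⌊b * n⌋₊ - 1) + 1 := by omega
    have h3 : ((⌊b * n⌋₊ : ℕ):ℝ) ≤ ((⌊b * n⌋₊ - 1 : ℕ):ℝ) + 1 := by exact_mod_cast h2
    linarith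
  · filter_upwards [eventually_gt_atTop 0] with n hn
    have hn' : (0:ℝ) < n := by positivity
    rw [div_le_iff₀ hn']
    have h1 := Nat.floor_le (a := b * n) (by positivity)
    have h3 : ((⌊b * n⌋₊ - 1 : ℕ):ℝ) ≤ ((⌊b * n⌋₊ : ℕ):ℝ) := by exact_mod_cast Nat.sub_le _ _
    linarith

end PB

open PB in
/-- For every finite field `F` of size `q` and every real `δ ∈ (0,1)`,
`lim_{n→∞} (log_q |B_P(0, ⌊δn⌋)|)/n = κ_sp(δ)`. -/
theorem pairBall_card_limit {F : Type*} [Field F] [Fintype F] [DecidableEq F]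
    {q : ℕ} (hq : Fintype.card F = q) (δ : ℝ) (hδ0 : 0 < δ) (hδ1 : δ < 1) :
    Filter.Tendsto
      (fun n : ℕ =>
        Real.logb q ((pairBall (0 : Fin n → F) ⌊δ * n⌋₊).card) / n)
      Filter.atTop (nhds (kappaSP q δ)) := by
  have hq2 : 2 ≤ q := by rw [← hq]; exact Fintype.one_lt_card
  have hlq : 0 < Real.log q := Real.log_pos (by exact_mod_cast hq2)
  have hflr : ∀ n : ℕ, ⌊δ * n⌋₊ ≤ n := fun n => by
    apply Nat.floor_le_of_le
    have : (0:ℝ) ≤ n := by positivity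
    nlinarith
  have hpos : ∀ n : ℕ, 1 ≤ (pairBall (0 : Fin n → F) ⌊δ * n⌋₊).card := fun n => by
    apply Finset.card_pos.2
    exact ⟨0, by simp [pairBall, pairDist]⟩
  rw [kappa_eq q δ hδ1]
  set κ := sSup ((fun p => G q p / Real.log q) '' K δ) with hκ
  have hG : ∀ p ∈ K δ, G q p ≤ κ * Real.log q := fun p hp => by
    rw [← div_le_iff₀ hlq]
    exact le_csSup (K_bdd q δ) ⟨p, hp, rfl⟩
  have upper : ∀ n : ℕ, 0 < n →
      Real.logb q ((pairBall (0 : Fin n → F) ⌊δ * n⌋₊).card) / n ≤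
        κ + (2 * Real.log ((n:ℝ)+1) / n) / Real.log q := by
    intro n hn
    have hn' : (0:ℝ) < n := by positivity
    have hb := ball_upper (F := F) n ⌊δ * n⌋₊ ⌊Real.exp (n * (κ * Real.log q))⌋₊ (hflr n) (by
      intro w L hL hwL
      have hr := hflr n
      apply Nat.le_floor
      rw [hq]
      have hK : ((w:ℝ)/n, (L:ℝ)/n) ∈ K δ := by
        refine ⟨by positivity, ?_, ?_⟩
        · simp only
          gcongr
        · simp only
          rw [← add_div, div_le_iff₀ hn']
          have h1 := Nat.floor_le (a := δ * n) (by positivity)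
          have h2 : ((w:ℝ)+L) ≤ (⌊δ * n⌋₊ : ℕ) := by exact_mod_cast hwL
          linarith
      have h1 := (logT q n w L hq2 hn (by omega) hL (by omega)).1
      have hp : 0 < (q-1)^w * (w.choose L * (n-w).choose L) := by
        have := Nat.choose_pos hL
        have := Nat.choose_pos (by omega : L ≤ n - w)
        have : 0 < q - 1 := by omega
        positivity
      rw [← Real.log_le_iff_le_exp (by exact_mod_cast hp)]
      exact h1.trans (mul_le_mul_of_nonneg_left (hG _ hK) hn'.le))
    have hb' : ((pairBall (0 : Fin n → F) ⌊δ * n⌋₊).card : ℝ) ≤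
        ((n:ℝ)+1) * (n+1) * Real.exp (n * (κ * Real.log q)) := by
      calc ((pairBall (0 : Fin n → F) ⌊δ * n⌋₊).card : ℝ) ≤
          (((n+1) * (n+1) * ⌊Real.exp (n * (κ * Real.log q))⌋₊ : ℕ) : ℝ) := Nat.cast_le.2 hb
        _ ≤ _ := by
          push_cast
          gcongr
          exact Nat.floor_le (by positivity)
    have hl := Real.log_le_log (by exact_mod_cast hpos n) hb'
    rw [Real.log_mul (by positivity) (by positivity), Real.log_mul (by positivity) (by positivity),
      Real.log_exp] at hl
    unfold Real.logb
    rw [div_div, div_div, div_le_iff₀ (by positivity), add_mul, mul_comm (n:ℝ) (Real.log q),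
      div_mul_cancel₀ _ (by positivity)]
    linarith
  have lower : ∀ p ∈ K δ, ∀ a < G q p / Real.log q, ∀ᶠ n : ℕ in atTop,
      a < Real.logb q ((pairBall (0 : Fin n → F) ⌊δ * n⌋₊).card) / n ∨
      (p.1 = 0) := by
    rintro ⟨β, t⟩ ⟨h0, h1, h2⟩ a ha
    simp only at h0 h1 h2 ⊢
    by_cases hβ : β = 0
    · exact Eventually.of_forall fun n => Or.inr hβ
    have hβ0 : 0 < β := lt_of_le_of_ne (by linarith) (Ne.symm hβ)
    have l1 : Tendsto (fun n : ℕ => (G q (((⌊β * n⌋₊ - 1 : ℕ) : ℝ) / n, ((⌊t * n⌋₊ - 1 : ℕ) : ℝ) / n)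
        - 2 * Real.log ((n:ℝ)+1) / n) / Real.log q) atTop (𝓝 ((G q (β, t) - 0) / Real.log q)) := by
      refine ((((G_cont q).tendsto (β, t)).comp
        ((floor_lim β hβ0.le).prodMk_nhds (floor_lim t h0))).sub log_lim).div_const _
    rw [sub_zero] at l1
    have l2 := l1.eventually (lt_mem_nhds ha)
    have l3 : ∀ᶠ n : ℕ in atTop, 1 / β ≤ (n:ℝ) :=
      tendsto_natCast_atTop_atTop.eventually (eventually_ge_atTop (1/β))
    filter_upwards [l2, l3, eventually_gt_atTop 0] with n hn2 hn3 hn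
    left
    refine hn2.trans_le ?_
    have hn' : (0:ℝ) < n := by positivity
    have hb1 : 1 ≤ β * n := by rw [div_le_iff₀ hβ0] at hn3; linarith
    have f1 : 1 ≤ ⌊β * n⌋₊ := Nat.le_floor (by simpa using hb1)
    have f2 : ⌊t * n⌋₊ ≤ ⌊β * n⌋₊ := Nat.floor_mono (by gcongr)
    have f3 : ⌊β * n⌋₊ + ⌊t * n⌋₊ ≤ ⌊δ * n⌋₊ := by
      apply Nat.le_floor
      push_cast
      have a1 := Nat.floor_le (a := β * n) (by positivity)
      have a2 := Nat.floor_le (a := t * n) (by positivity)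
      nlinarith
    have f4 := hflr n
    set w := ⌊β * n⌋₊ - 1 with hw
    set L := ⌊t * n⌋₊ - 1 with hL
    have hT := (logT q n w L hq2 hn (by omega) (by omega) (by omega)).2
    have hB := ball_lower (F := F) n w L ⌊δ * n⌋₊ (by omega) (by omega)
    rw [hq] at hB
    have hp : 0 < (q-1)^w * (w.choose L * (n-w).choose L) := by
      have := Nat.choose_pos (by omega : L ≤ w)
      have := Nat.choose_pos (by omega : L ≤ n - w)
      have : 0 < q - 1 := by omega
      positivity
    have hl : Real.log (((q-1)^w * (w.choose L * (n-w).choose L) : ℕ):ℝ) ≤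
        Real.log ((pairBall (0 : Fin n → F) ⌊δ * n⌋₊).card) :=
      Real.log_le_log (by exact_mod_cast hp) (by exact_mod_cast hB)
    unfold Real.logb
    rw [div_right_comm]
    gcongr
    rw [le_div_iff₀ hn', sub_mul, div_mul_cancel₀ _ hn'.ne']
    linarith
  have nonneg : ∀ n : ℕ, 0 ≤ Real.logb q ((pairBall (0 : Fin n → F) ⌊δ * n⌋₊).card) / n := fun n => by
    unfold Real.logb
    have := Real.log_nonneg (by exact_mod_cast hpos n :
      (1:ℝ) ≤ ((pairBall (0 : Fin n → F) ⌊δ * n⌋₊).card : ℝ))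
    positivity
  rw [tendsto_order]
  constructor
  · intro a ha
    have hne : ((fun p => G q p / Real.log q) '' K δ).Nonempty :=
      Set.Nonempty.image _ ⟨((0:ℝ), (0:ℝ)), by simp, by simp, by simpa using hδ0.le⟩
    obtain ⟨_, ⟨p, hp, rfl⟩, hap⟩ := exists_lt_of_lt_csSup hne ha
    filter_upwards [lower p hp a hap] with n hn
    rcases hn with hn | hn
    · exact hn
    · refine lt_of_lt_of_le hap (le_trans (le_of_eq ?_) (nonneg n))
      obtain ⟨β, t⟩ := p
      obtain ⟨h0, h1, h2⟩ := hp
      simp only at hn h0 h1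
      have ht : t = 0 := by linarith
      subst hn ht
      simp [G, E]
  · intro a ha
    have l := (log_lim.div_const (Real.log q)).const_add κ
    rw [zero_div, add_zero] at l
    filter_upwards [l.eventually (gt_mem_nhds ha), eventually_gt_atTop 0] with n h1 h2
    exact (upper n h2).trans_lt h1
end

section
/- (Gilbert–Varshamov upper bound on list decodability) For every prime power q, every τ ∈ (0,1), every constant c > 0, and every ε > 0, there exists n₀ such that for all n ≥ n₀ the following holds: if a code C ⊆ F_q^n is18 (τn, L)_P-list decodable for some L ≤ n^c, then its rate satisfies (log_q |C|)/n ≤ 1 − κ_sp(τ) + ε. -/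
open scoped Classical

/-- A code `C ⊆ F_q^n` is `(r, L)_P`-list decodable if every symbol-pair ball of
radius `r` contains at most `L` codewords of `C`. -/
noncomputable def pairListDecodable {F : Type*} [Fintype F] [DecidableEq F] {n : ℕ}
    (C : Finset (Fin n → F)) (r : ℝ) (L : ℕ) : Prop :=
  ∀ y : Fin n → F, (C.filter fun c => (pairDist y c : ℝ) ≤ r).card ≤ L

open Filter Topology

/-- Linear pair cost of a list with previous symbol `p`. -/
def gvCost {F : Type*} [Field F] [DecidableEq F] : F → List F → ℕ
  | _, [] => 0
  | p, a :: x => (if p ≠ 0 ∨ a ≠ 0 then 1 else 0) + gvCost a x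

theorem gv_combine {F : Type*} [Field F] [Fintype F] [DecidableEq F]
    (S T : Finset (List F)) :
    ∃ U : Finset (List F), U.card = S.card + (Fintype.card F - 1) * T.card ∧
      ∀ x ∈ U, (∃ y ∈ S, x = 0 :: y) ∨ (∃ a : F, a ≠ 0 ∧ ∃ y ∈ T, x = a :: y) := by
  refine ⟨S.image (fun y => 0 :: y) ∪
    ((Finset.univ.erase (0:F)) ×ˢ T).image (fun ay => ay.1 :: ay.2), ?_, ?_⟩
  · rw [Finset.card_union_of_disjoint, Finset.card_image_of_injective,
      Finset.card_image_of_injective, Finset.card_product, Finset.card_erase_of_mem (Finset.mem_univ _),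
      Finset.card_univ]
    · rintro ⟨a, x⟩ ⟨b, y⟩ h
      simpa using h
    · intro a b h
      simpa using h
    · rw [Finset.disjoint_left]
      intro x hx hy
      simp only [Finset.mem_image, Finset.mem_product, Finset.mem_erase] at hx hy
      obtain ⟨y, _, rfl⟩ := hx
      obtain ⟨⟨a, z⟩, ⟨⟨h, _⟩, _⟩, h2⟩ := hy
      simp at h2 h
      exact h h2.1
  · intro x hx
    simp only [Finset.mem_union, Finset.mem_image, Finset.mem_product, Finset.mem_erase] at hx
    rcases hx with ⟨y, hy, rfl⟩ | ⟨⟨a, z⟩, ⟨⟨h, _⟩, h3⟩, rfl⟩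
    · exact Or.inl ⟨y, hy, rfl⟩
    · exact Or.inr ⟨a, h, z, h3, rfl⟩

theorem gv_allnonzero {F : Type*} [Field F] [Fintype F] [DecidableEq F] (w : ℕ) :
    ∃ S : Finset (List F), (Fintype.card F - 1) ^ w ≤ S.card ∧
      ∀ x ∈ S, x.length = w ∧ ∀ p, gvCost p x ≤ w := by
  induction w with
  | zero => exact ⟨{[]}, by simp, by simp [gvCost]⟩
  | succ w ih =>
    obtain ⟨S, h1, h2⟩ := ih
    obtain ⟨U, hU, hU2⟩ := gv_combine (∅ : Finset (List F)) S
    refine ⟨U, ?_, ?_⟩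
    · rw [hU, pow_succ, mul_comm]; simp only [Finset.card_empty, zero_add]; gcongr
    · intro x hx
      rcases hU2 x hx with ⟨y, hy, rfl⟩ | ⟨a, ha, y, hy, rfl⟩
      · simp at hy
      · obtain ⟨h3, h4⟩ := h2 y hy
        refine ⟨by simp [h3], fun p => ?_⟩
        have := h4 a
        simp only [gvCost]
        split_ifs <;> omega

def gvP0 (F : Type*) [Field F] [Fintype F] [DecidableEq F] (z w l : ℕ) : Prop :=
  ∃ S : Finset (List F), z.choose l * w.choose l * (Fintype.card F - 1) ^ w ≤ S.card ∧
      ∀ x ∈ S, x.length = z + w ∧ gvCost 0 x ≤ w + l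

def gvP1 (F : Type*) [Field F] [Fintype F] [DecidableEq F] (z w l : ℕ) : Prop :=
  ∃ S : Finset (List F), z.choose l * (w+1).choose (l+1) * (Fintype.card F - 1) ^ w ≤ S.card ∧
      ∀ x ∈ S, x.length = z + 1 + w ∧ ∀ p, gvCost p x ≤ w + l + 1

theorem gv_P1 {F : Type*} [Field F] [Fintype F] [DecidableEq F] (z : ℕ)
    (h : ∀ w l, gvP0 F z w l) (w l : ℕ) : gvP1 F z w l := by
  have key : ∀ w l, ∀ T : Finset (List F), (∀ x ∈ T, x.length + 1 = z + 1 + w ∧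
      ∀ p, gvCost p x ≤ w + l) → ∃ S : Finset (List F),
      z.choose l * w.choose l * (Fintype.card F - 1) ^ w + (Fintype.card F - 1) * T.card ≤ S.card ∧
      ∀ x ∈ S, x.length = z + 1 + w ∧ ∀ p, gvCost p x ≤ w + l + 1 := by
    intro w l T hT
    obtain ⟨S, h1, h2⟩ := h w l
    obtain ⟨U, hU, hU2⟩ := gv_combine S T
    refine ⟨U, by rw [hU]; gcongr, ?_⟩
    intro x hx
    rcases hU2 x hx with ⟨y, hy, rfl⟩ | ⟨a, ha, y, hy, rfl⟩
    · obtain ⟨h3, h4⟩ := h2 y hy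
      refine ⟨by simp [h3]; omega, fun p => ?_⟩
      simp only [gvCost]
      split_ifs <;> omega
    · obtain ⟨h3, h4⟩ := hT y hy
      refine ⟨by simp [h3], fun p => ?_⟩
      have := h4 a
      simp only [gvCost]
      split_ifs <;> omega
  induction w with
  | zero =>
    obtain ⟨S, h1, h2⟩ := key 0 l ∅ (by simp)
    refine ⟨S, le_trans ?_ h1, h2⟩
    rw [Nat.choose_succ_succ]
    simp
  | succ w ih =>
    obtain ⟨T, hT1, hT2⟩ := ih
    obtain ⟨S, h1, h2⟩ := key (w+1) l T (by
      intro x hx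
      obtain ⟨h3, h4⟩ := hT2 x hx
      exact ⟨by omega, fun p => by have := h4 p; omega⟩)
    refine ⟨S, le_trans ?_ h1, h2⟩
    rw [Nat.choose_succ_succ (w+1)]
    calc _ = z.choose l * (w+1).choose l * (Fintype.card F - 1) ^ (w+1) +
          (Fintype.card F - 1) * (z.choose l * (w+1).choose (l+1) * (Fintype.card F - 1) ^ w) := by ring
      _ ≤ _ := by gcongr

theorem gv_P0 {F : Type*} [Field F] [Fintype F] [DecidableEq F] (z : ℕ) :
    ∀ w l, gvP0 F z w l := by
  induction z with
  | zero =>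
    intro w l
    cases l with
    | zero =>
      obtain ⟨S, h1, h2⟩ := gv_allnonzero (F := F) w
      exact ⟨S, by simpa using h1, fun x hx => ⟨by simp [(h2 x hx).1], by simpa using (h2 x hx).2 0⟩⟩
    | succ l => exact ⟨∅, by simp, by simp⟩
  | succ z ih =>
    intro w l
    have key : ∀ T : Finset (List F), (∀ x ∈ T, x.length + 1 = z + 1 + w ∧
      ∀ p, gvCost p x + 1 ≤ w + l) → ∃ S : Finset (List F),
      z.choose l * w.choose l * (Fintype.card F - 1) ^ w + (Fintype.card F - 1) * T.card ≤ S.card ∧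
      ∀ x ∈ S, x.length = z + 1 + w ∧ gvCost 0 x ≤ w + l := by
      intro T hT
      obtain ⟨S, h1, h2⟩ := ih w l
      obtain ⟨U, hU, hU2⟩ := gv_combine S T
      refine ⟨U, by rw [hU]; gcongr, ?_⟩
      intro x hx
      rcases hU2 x hx with ⟨y, hy, rfl⟩ | ⟨a, ha, y, hy, rfl⟩
      · obtain ⟨h3, h4⟩ := h2 y hy
        refine ⟨by simp [h3]; omega, ?_⟩
        simpa [gvCost] using h4
      · obtain ⟨h3, h4⟩ := hT y hy
        refine ⟨by simp [h3], ?_⟩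
        have := h4 a
        simp only [gvCost]
        split_ifs <;> omega
    cases l with
    | zero =>
      obtain ⟨S, h1, h2⟩ := key ∅ (by simp)
      exact ⟨S, by simpa using h1, h2⟩
    | succ l =>
      cases w with
      | zero => exact ⟨∅, by simp, by simp⟩
      | succ w =>
        obtain ⟨T, hT1, hT2⟩ := gv_P1 z ih w l
        obtain ⟨S, h1, h2⟩ := key T (by
          intro x hx
          obtain ⟨h3, h4⟩ := hT2 x hx
          exact ⟨by omega, fun p => by have := h4 p; omega⟩)
        refine ⟨S, le_trans ?_ h1, h2⟩
        rw [Nat.choose_succ_succ z]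
        calc _ = z.choose (l+1) * (w+1).choose (l+1) * (Fintype.card F - 1) ^ (w+1) +
            (Fintype.card F - 1) * (z.choose l * (w+1).choose (l+1) * (Fintype.card F - 1) ^ w) := by ring
          _ ≤ _ := by gcongr

theorem gvCost_eq_sum {F : Type*} [Field F] [DecidableEq F] (x : List F) : ∀ p : F,
    gvCost p x = ∑ i ∈ Finset.range x.length,
      if (p :: x).getD i 0 ≠ 0 ∨ (p :: x).getD (i+1) 0 ≠ 0 then 1 else 0 := by
  induction x with
  | nil => intro p; simp [gvCost]
  | cons a x ih =>
    intro p
    rw [List.length_cons, Finset.sum_range_succ', gvCost, ih a, add_comm]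
    simp

theorem gv_pairDist_le {F : Type*} [Field F] [DecidableEq F] (n : ℕ) (x : List F)
    (hx : x.length = n) :
    pairDist (0 : Fin n → F) (fun i => x.getD i 0) ≤ gvCost 0 x + 1 := by
  cases n with
  | zero => simp [pairDist]
  | succ m =>
    have e : pairDist (0 : Fin (m+1) → F) (fun i => x.getD i 0) =
        ∑ i ∈ Finset.range (m+1), if x.getD i 0 ≠ 0 ∨ x.getD ((i+1) % (m+1)) 0 ≠ 0 then 1 else 0 := by
      rw [pairDist, Finset.card_filter, Finset.sum_range]
      refine Finset.sum_congr rfl fun i _ => ?_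
      refine if_congr ?_ rfl rfl
      simp only [Pi.zero_apply, ne_eq, Prod.mk.injEq, not_and_or, eq_comm (a := (0:F))]
    rw [e, gvCost_eq_sum, hx, Finset.sum_range_succ, Finset.sum_range_succ' _ m]
    have : ∑ i ∈ Finset.range m, (if x.getD i 0 ≠ 0 ∨ x.getD ((i+1) % (m+1)) 0 ≠ 0 then 1 else 0)
      = ∑ k ∈ Finset.range m, if (0 :: x).getD (k + 1) 0 ≠ 0 ∨ (0 :: x).getD (k + 1 + 1) 0 ≠ 0 then 1 else 0 := by
      refine Finset.sum_congr rfl fun i hi => ?_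
      rw [Finset.mem_range] at hi
      rw [Nat.mod_eq_of_lt (by omega)]
      simp
    rw [this]
    split_ifs <;> omega

theorem gv_ball {F : Type*} [Field F] [Fintype F] [DecidableEq F] (n z w l : ℕ) (h : z + w = n) :
    z.choose l * w.choose l * (Fintype.card F - 1) ^ w ≤
      (Finset.univ.filter fun v : Fin n → F => pairDist 0 v ≤ w + l + 1).card := by
  obtain ⟨S, h1, h2⟩ := gv_P0 (F := F) z w l
  refine h1.trans ?_
  refine Finset.card_le_card_of_injOn (fun x => fun i : Fin n => x.getD i 0) ?_ ?_
  · intro x hx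
    have := h2 x hx
    have h3 := gv_pairDist_le n x (by omega)
    simp only [Finset.coe_filter, Finset.mem_univ, true_and, Set.mem_ofPred_eq]
    omega
  · intro x hx y hy hxy
    have hx' := (h2 x hx).1
    have hy' := (h2 y hy).1
    refine List.ext_getElem (by omega) fun i hi hj => ?_
    have := congrFun hxy ⟨i, by omega⟩
    simpa [hi, hj] using this

theorem gv_pairDist_sub {F : Type*} [Field F] [DecidableEq F] (n : ℕ) (y v : Fin n → F) :
    pairDist y v = pairDist 0 (v - y) := by
  unfold pairDist
  congr 1
  refine Finset.filter_congr fun i _ => ?_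
  simp only [Pi.zero_apply, Pi.sub_apply, ne_eq, Prod.mk.injEq, eq_comm (a := (0:F)), sub_eq_zero,
    eq_comm (a := v _)]

theorem gv_count {F : Type*} [Field F] [Fintype F] [DecidableEq F] (n : ℕ)
    (C : Finset (Fin n → F)) (L : ℕ) (r : ℝ) (h : pairListDecodable C r L) :
    C.card * (Finset.univ.filter fun v : Fin n → F => (pairDist 0 v : ℝ) ≤ r).card ≤
      L * Fintype.card F ^ n := by
  have h1 : ∑ y : Fin n → F, (C.filter fun c => (pairDist y c : ℝ) ≤ r).card ≤
      L * Fintype.card F ^ n := by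
    calc _ ≤ ∑ y : Fin n → F, L := Finset.sum_le_sum fun y _ => h y
      _ = _ := by simp [mul_comm]
  refine le_trans (le_of_eq ?_) h1
  simp_rw [Finset.card_filter]
  rw [Finset.sum_comm]
  have hc : ∀ c ∈ C, ∑ y : Fin n → F, (if (pairDist y c : ℝ) ≤ r then 1 else 0) =
      ∑ v : Fin n → F, if (pairDist 0 v : ℝ) ≤ r then 1 else 0 := by
    intro c _
    rw [← (Equiv.subLeft c).sum_comp (fun v : Fin n → F => if (pairDist 0 v : ℝ) ≤ r then 1 else 0)]
    refine Finset.sum_congr rfl fun v _ => ?_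
    rw [gv_pairDist_sub]
    simp
  rw [Finset.sum_congr rfl hc, Finset.sum_const, smul_eq_mul]


theorem gv_fact_lower (m : ℕ) : (m:ℝ) * Real.log m - m ≤ Real.log (m.factorial) := by
  rcases Nat.eq_zero_or_pos m with rfl | hm
  · simp
  have h0 : (0:ℝ) < m := by exact_mod_cast hm
  have h := Real.pow_div_factorial_le_exp (m:ℝ) h0.le m
  have hf : (0:ℝ) < m.factorial := by exact_mod_cast m.factorial_pos
  have h2 := Real.log_le_log (by positivity) h
  rw [Real.log_exp, Real.log_div (by positivity) (by positivity), Real.log_pow] at h2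
  linarith

theorem gv_fact_upper (m : ℕ) :
    Real.log (m.factorial) ≤ (m:ℝ) * Real.log m - m + (2 * Real.log (m+1) + 1) := by
  induction m with
  | zero => simp
  | succ m ih =>
    rw [Nat.factorial_succ]
    push_cast
    have hf : (0:ℝ) < m.factorial := by exact_mod_cast m.factorial_pos
    have h1 : (0:ℝ) < (m:ℝ) + 1 := by positivity
    rw [Real.log_mul h1.ne' hf.ne']
    have h3 : Real.log ((m:ℝ)+1) ≤ Real.log ((m:ℝ)+1+1) := Real.log_le_log h1 (by linarith)
    have h6 : (m:ℝ) * Real.log m + m / (m+1) ≤ m * Real.log (m+1) := by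
      rcases Nat.eq_zero_or_pos m with rfl | hm
      · simp
      have h0 : (0:ℝ) < m := by exact_mod_cast hm
      have := Real.log_le_sub_one_of_pos (x := (m:ℝ)/(m+1)) (by positivity)
      rw [Real.log_div h0.ne' h1.ne'] at this
      have e : (m:ℝ)/(m+1) - 1 = - (1/(m+1)) := by field_simp; ring
      rw [e] at this
      have h7 : (m:ℝ) * (Real.log m - Real.log (m+1)) ≤ m * (-(1/(m+1))) :=
        mul_le_mul_of_nonneg_left this h0.le
      have h8 : (m:ℝ) * (-(1/(m+1))) = - (m/(m+1)) := by ring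
      linarith
    have h9 : Real.log ((m:ℝ)+1) + 1/(m+2) ≤ Real.log ((m:ℝ)+1+1) := by
      have := Real.log_le_sub_one_of_pos (x := ((m:ℝ)+1)/(m+1+1)) (by positivity)
      rw [Real.log_div h1.ne' (by positivity)] at this
      have e : ((m:ℝ)+1)/(m+1+1) - 1 = - (1/(m+2)) := by field_simp; ring
      linarith
    have h10 : (1:ℝ) ≤ m/(m+1) + 2 * (1/(m+2)) := by
      have : (m:ℝ)/(m+1) + 2 * (1/(m+2)) - 1 = m / ((m+1)*(m+2)) := by field_simp; ring
      have : (0:ℝ) ≤ m / ((m+1)*(m+2)) := by positivity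
      linarith
    linarith

theorem gv_fact_lim (m : ℕ → ℕ) (a : ℝ) (h : Tendsto (fun n : ℕ => (m n : ℝ) / n) atTop (𝓝 a)) :
    Tendsto (fun n : ℕ => Real.log ((m n).factorial) / n - (m n : ℝ) / n * Real.log n) atTop
      (𝓝 (a * Real.log a - a)) := by
  have hlog : Tendsto (fun n : ℕ => Real.log n / n) atTop (𝓝 0) := by
    have := Real.isLittleO_log_id_atTop.tendsto_div_nhds_zero
    exact this.comp tendsto_natCast_atTop_atTop
  have h1n : Tendsto (fun n : ℕ => (1:ℝ) / n) atTop (𝓝 0) := tendsto_one_div_atTop_nhds_zero_nat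
  have hmain : Tendsto (fun n : ℕ => (m n : ℝ) / n * Real.log ((m n : ℝ) / n) - (m n : ℝ) / n) atTop
      (𝓝 (a * Real.log a - a)) :=
    ((Real.continuous_mul_log.tendsto a).comp h).sub h
  have herr : Tendsto (fun n : ℕ => ((m n : ℝ) / n * Real.log ((m n : ℝ) / n) - (m n : ℝ) / n)
      + (2 * (Real.log n / n + ((m n : ℝ) / n + 1 / n) * (1 / n)) + 1 / n)) atTop
      (𝓝 (a * Real.log a - a)) := by
    have := hmain.add (((hlog.add ((h.add h1n).mul h1n)).const_mul 2).add h1n)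
    simpa using this
  have key : ∀ n : ℕ, 0 < n → ∀ k : ℕ, ((k:ℝ) * Real.log k - k) / n - (k:ℝ)/n * Real.log n =
      (k : ℝ) / n * Real.log ((k : ℝ) / n) - (k : ℝ) / n := by
    intro n hn k
    rcases Nat.eq_zero_or_pos k with rfl | hk
    · simp
    have h0 : (0:ℝ) < k := by exact_mod_cast hk
    have h1 : (0:ℝ) < n := by exact_mod_cast hn
    rw [Real.log_div h0.ne' h1.ne']
    ring
  refine tendsto_of_tendsto_of_tendsto_of_le_of_le' hmain herr ?_ ?_
  · filter_upwards [eventually_gt_atTop 0] with n hn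
    have h1 : (0:ℝ) < n := by exact_mod_cast hn
    rw [← key n hn]
    have := gv_fact_lower (m n)
    gcongr
  · filter_upwards [eventually_gt_atTop 0] with n hn
    have h1 : (0:ℝ) < n := by exact_mod_cast hn
    rw [← key n hn]
    have h2 := gv_fact_upper (m n)
    have h3 : Real.log ((m n : ℝ) + 1) ≤ Real.log n + ((m n : ℝ) / n + 1 / n) := by
      have := Real.log_le_sub_one_of_pos (x := ((m n : ℝ) + 1) / n) (by positivity)
      rw [Real.log_div (by positivity) h1.ne', add_div] at this
      linarith
    have h4 : Real.log ((m n).factorial) / n ≤ ((m n:ℝ) * Real.log (m n) - m n +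
        (2 * (Real.log n + ((m n : ℝ) / n + 1 / n)) + 1)) / n := by
      gcongr
      linarith
    have h5 : ((m n:ℝ) * Real.log (m n) - m n +
        (2 * (Real.log n + ((m n : ℝ) / n + 1 / n)) + 1)) / n =
        ((m n:ℝ) * Real.log (m n) - m n) / n +
        (2 * (Real.log n / n + ((m n : ℝ) / n + 1 / n) * (1 / n)) + 1 / n) := by ring
    linarith

theorem gv_choose_lim (m k : ℕ → ℕ) (a b : ℝ)
    (hm : Tendsto (fun n : ℕ => (m n : ℝ) / n) atTop (𝓝 a))
    (hk : Tendsto (fun n : ℕ => (k n : ℝ) / n) atTop (𝓝 b))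
    (hkm : ∀ᶠ n in atTop, k n ≤ m n) :
    Tendsto (fun n : ℕ => Real.log ((m n).choose (k n)) / n) atTop
      (𝓝 (a * Real.log a - b * Real.log b - (a - b) * Real.log (a - b))) := by
  have hd : Tendsto (fun n : ℕ => ((m n - k n : ℕ) : ℝ) / n) atTop (𝓝 (a - b)) := by
    refine (hm.sub hk).congr' ?_
    filter_upwards [hkm] with n hn
    rw [Nat.cast_sub hn]
    ring
  have := ((gv_fact_lim m a hm).sub (gv_fact_lim k b hk)).sub (gv_fact_lim _ _ hd)
  have e : a * Real.log a - a - (b * Real.log b - b) - ((a - b) * Real.log (a - b) - (a - b)) =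
    a * Real.log a - b * Real.log b - (a - b) * Real.log (a - b) := by ring
  rw [e] at this
  refine this.congr' ?_
  filter_upwards [hkm] with n hn
  have h1 := Nat.choose_mul_factorial_mul_factorial hn
  have h2 : (((m n).choose (k n) : ℕ) : ℝ) * (k n).factorial * (m n - k n).factorial =
      (m n).factorial := by exact_mod_cast h1
  have hc : (0:ℝ) < (m n).choose (k n) := by exact_mod_cast Nat.choose_pos hn
  have f1 : (0:ℝ) < (k n).factorial := by exact_mod_cast Nat.factorial_pos _
  have f2 : (0:ℝ) < (m n - k n).factorial := by exact_mod_cast Nat.factorial_pos _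
  rw [← h2, Real.log_mul (by positivity) (by positivity), Real.log_mul (by positivity) (by positivity),
    Nat.cast_sub hn]
  ring

theorem gv_mul_qEntropy (q : ℕ) (a u : ℝ) (hu : 0 ≤ u) (hua : u ≤ a) (hq : 1 < q) :
    Real.log q * (a * qEntropy q (u / a)) = u * Real.log (q - 1) +
      (a * Real.log a - u * Real.log u - (a - u) * Real.log (a - u)) := by
  have hl : Real.log q ≠ 0 := (Real.log_pos (by exact_mod_cast hq)).ne'
  rcases eq_or_lt_of_le (hu.trans hua) with h0 | h0
  · subst h0
    obtain rfl : u = 0 := le_antisymm hua hu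
    simp
  have key : ∀ v : ℝ, 0 ≤ v → a * (v / a * Real.log (v / a)) = v * Real.log v - v * Real.log a := by
    intro v hv
    rcases eq_or_lt_of_le hv with rfl | hv
    · simp
    rw [Real.log_div hv.ne' h0.ne']
    field_simp
  have e : 1 - u / a = (a - u) / a := by field_simp
  have k1 := key u hu
  have k2 := key (a - u) (by linarith)
  unfold qEntropy Real.logb
  rw [e]
  have : Real.log q * (a * (u / a * (Real.log (q - 1) / Real.log q) -
      u / a * (Real.log (u / a) / Real.log q) -
      (a - u) / a * (Real.log ((a - u) / a) / Real.log q))) =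
      a * (u / a) * Real.log (q - 1) - a * (u / a * Real.log (u / a)) -
        a * ((a - u) / a * Real.log ((a - u) / a)) := by
    field_simp
  rw [this, k1, k2, mul_div_cancel₀ _ h0.ne']
  ring

theorem gv_floor_lim (a : ℝ) (ha : 0 ≤ a) :
    Tendsto (fun n : ℕ => ((⌊a * n⌋₊ : ℕ) : ℝ) / n) atTop (𝓝 a) :=
  (tendsto_nat_floor_mul_div_atTop ha).comp tendsto_natCast_atTop_atTop

theorem gv_pred_lim (m : ℕ → ℕ) (a : ℝ) (h : Tendsto (fun n : ℕ => (m n : ℝ) / n) atTop (𝓝 a)) :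
    Tendsto (fun n : ℕ => ((m n - 1 : ℕ) : ℝ) / n) atTop (𝓝 a) := by
  have h1n : Tendsto (fun n : ℕ => (1:ℝ) / n) atTop (𝓝 0) := tendsto_one_div_atTop_nhds_zero_nat
  refine tendsto_of_tendsto_of_tendsto_of_le_of_le (by simpa using h.sub h1n) h ?_ ?_
  · intro n
    have : (m n : ℝ) ≤ ((m n - 1 : ℕ) : ℝ) + 1 := by exact_mod_cast (by omega)
    show (m n : ℝ) / n - (n:ℝ)⁻¹ ≤ ((m n - 1 : ℕ) : ℝ) / n
    rw [← one_div, ← sub_div]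
    gcongr
    linarith
  · intro n
    show ((m n - 1 : ℕ) : ℝ) / n ≤ (m n : ℝ) / n
    gcongr
    omega

theorem gv_volume (q : ℕ) (hq : 1 < q) (τ : ℝ) (hτ0 : 0 < τ) (hτ1 : τ < 1) (β θ : ℝ)
    (h0 : 0 ≤ θ / 2) (h1 : θ / 2 ≤ β) (h2 : β ≤ θ) (h3 : θ ≤ τ) :
    ∃ w l : ℕ → ℕ, (∀ᶠ n : ℕ in atTop, w n ≤ n ∧ l n ≤ w n ∧ l n ≤ n - w n ∧
        ((w n + l n + 1 : ℕ) : ℝ) ≤ τ * n) ∧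
      Tendsto (fun n : ℕ => Real.log (((n - w n).choose (l n) * (w n).choose (l n) * (q - 1) ^ (w n) : ℕ) : ℝ) / n)
        atTop (𝓝 (Real.log q * (β * qEntropy q ((2 * β - θ) / β) +
          (1 - β) * qEntropy q ((θ - β) / (1 - β))))) := by
  have hβ : 0 ≤ β := h0.trans h1
  set w : ℕ → ℕ := fun n => ⌊β * n⌋₊ - 1 with hw
  set l : ℕ → ℕ := fun n => min (w n) ⌊(θ - β) * n⌋₊ with hl
  have hwl : Tendsto (fun n : ℕ => (w n : ℝ) / n) atTop (𝓝 β) := gv_pred_lim _ _ (gv_floor_lim β hβ)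
  have hll : Tendsto (fun n : ℕ => (l n : ℝ) / n) atTop (𝓝 (θ - β)) := by
    have := hwl.min (gv_floor_lim (θ - β) (by linarith))
    rw [min_eq_right (by linarith : θ - β ≤ β)] at this
    refine this.congr fun n => ?_
    rw [hl]
    push_cast
    exact (min_div_div_right (Nat.cast_nonneg n) _ _)
  have hev : ∀ᶠ n : ℕ in atTop, w n ≤ n ∧ l n ≤ w n ∧ l n ≤ n - w n ∧
        ((w n + l n + 1 : ℕ) : ℝ) ≤ τ * n := by
    filter_upwards [tendsto_natCast_atTop_atTop.eventually (eventually_ge_atTop (1 / τ))] with n hn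
    have hn1 : 1 ≤ τ * n := by
      rw [div_le_iff₀ hτ0] at hn
      linarith
    have hn0 : (0:ℝ) ≤ n := Nat.cast_nonneg n
    have hlw : l n ≤ w n := min_le_left _ _
    have hsum : ((w n + l n + 1 : ℕ) : ℝ) ≤ τ * n := by
      by_cases hz : w n = 0
      · have : l n = 0 := by omega
        rw [hz, this]; simpa using hn1
      · have e : w n + 1 = ⌊β * n⌋₊ := by simp only [hw] at hz ⊢; omega
        have f1 : ((w n : ℝ) + 1) ≤ β * n := by
          have := Nat.floor_le (by positivity : 0 ≤ β * n)
          rw [← e] at this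
          exact_mod_cast this
        have f2 : (l n : ℝ) ≤ (θ - β) * n := by
          have := Nat.floor_le (mul_nonneg (by linarith) hn0 : 0 ≤ (θ - β) * n)
          have g : l n ≤ ⌊(θ - β) * n⌋₊ := min_le_right _ _
          have : (l n : ℝ) ≤ (⌊(θ - β) * n⌋₊ : ℝ) := by exact_mod_cast g
          linarith
        have f3 : θ * n ≤ τ * n := by gcongr
        push_cast
        linarith
    have hle : w n + l n + 1 ≤ n := by
      have : ((w n + l n + 1 : ℕ) : ℝ) ≤ n := by nlinarith
      exact_mod_cast this
    exact ⟨by omega, hlw, by omega, hsum⟩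
  refine ⟨w, l, hev, ?_⟩
  have hz : Tendsto (fun n : ℕ => ((n - w n : ℕ) : ℝ) / n) atTop (𝓝 (1 - β)) := by
    refine (hwl.const_sub 1).congr' ?_
    filter_upwards [hev, eventually_gt_atTop 0] with n hn hn0
    have : (n:ℝ) ≠ 0 := by positivity
    rw [Nat.cast_sub hn.1]
    field_simp
  have c1 := gv_choose_lim _ l _ _ hz hll (hev.mono fun n h => h.2.2.1)
  have c2 := gv_choose_lim w l _ _ hwl hll (hev.mono fun n h => h.2.1)
  have c3 := (c1.add c2).add (hwl.mul_const (Real.log ((q:ℝ) - 1)))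
  have e : Real.log q * (β * qEntropy q ((2 * β - θ) / β) +
          (1 - β) * qEntropy q ((θ - β) / (1 - β))) =
      (1 - β) * Real.log (1 - β) - (θ - β) * Real.log (θ - β) -
          (1 - β - (θ - β)) * Real.log (1 - β - (θ - β)) +
        (β * Real.log β - (θ - β) * Real.log (θ - β) - (β - (θ - β)) * Real.log (β - (θ - β))) +
      β * Real.log ((q:ℝ) - 1) := by
    rw [mul_add, gv_mul_qEntropy q β _ (by linarith) (by linarith) hq,
      gv_mul_qEntropy q (1 - β) _ (by linarith) (by linarith) hq]
    have e1 : β - (2 * β - θ) = θ - β := by ring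
    have e2 : β - (θ - β) = 2 * β - θ := by ring
    rw [e1, e2]
    ring
  rw [e]
  refine c3.congr' ?_
  filter_upwards [hev] with n hn
  obtain ⟨_, g2, g3, _⟩ := hn
  have p1 : (0:ℝ) < (n - w n).choose (l n) := by exact_mod_cast Nat.choose_pos g3
  have p2 : (0:ℝ) < (w n).choose (l n) := by exact_mod_cast Nat.choose_pos g2
  have p3 : (0:ℝ) < (q:ℝ) - 1 := by
    have : (1:ℝ) < q := by exact_mod_cast hq
    linarith
  rw [Nat.cast_mul, Nat.cast_mul, Nat.cast_pow, Nat.cast_sub hq.le, Nat.cast_one,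
    Real.log_mul (by positivity) (by positivity), Real.log_mul (by positivity) (by positivity),
    Real.log_pow]
  ring

/-- (Gilbert–Varshamov upper bound on list decodability) For every finite field of
size `q`, every `τ ∈ (0,1)`, every constant `c > 0`, and every `ε > 0`, there is `n₀`
such that for all `n ≥ n₀`: if `C ⊆ F_q^n` is `(τn, L)_P`-list decodable for some
`L ≤ n^c`, then `(log_q |C|)/n ≤ 1 − κ_sp(τ) + ε`. -/
theorem gv_upper_bound_list_decoding {F : Type*} [Field F] [Fintype F] [DecidableEq F]
    {q : ℕ} (hq : Fintype.card F = q) (τ : ℝ) (hτ0 : 0 < τ) (hτ1 : τ < 1)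
    (c : ℝ) (hc : 0 < c) (ε : ℝ) (hε : 0 < ε) :
    ∃ n₀ : ℕ, ∀ n : ℕ, n₀ ≤ n → ∀ C : Finset (Fin n → F), ∀ L : ℕ,
      (L : ℝ) ≤ (n : ℝ) ^ c → pairListDecodable C (τ * n) L →
      Real.logb q C.card / n ≤ 1 - kappaSP q τ + ε := by
  have hq1 : 1 < q := hq ▸ Fintype.one_lt_card
  have hlq : 0 < Real.log q := Real.log_pos (by exact_mod_cast hq1)
  obtain ⟨y, ⟨β, θ, h0, h1, h2, h3, rfl⟩, hy⟩ := exists_lt_of_lt_csSup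
    (s := {y : ℝ | ∃ β θ : ℝ, 0 ≤ θ / 2 ∧ θ / 2 ≤ β ∧ β ≤ θ ∧ θ ≤ τ ∧
    y = β * qEntropy q ((2 * β - θ) / β) + (1 - β) * qEntropy q ((θ - β) / (1 - β))})
    ⟨_, 0, 0, by simp, by simp, le_rfl, hτ0.le, rfl⟩ (sub_lt_self (kappaSP q τ) hε)
  obtain ⟨w, l, hev, hlim⟩ := gv_volume q hq1 τ hτ0 hτ1 β θ h0 h1 h2 h3
  set f := β * qEntropy q ((2 * β - θ) / β) + (1 - β) * qEntropy q ((θ - β) / (1 - β)) with hf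
  have hlog : Tendsto (fun n : ℕ => Real.log n / n) atTop (𝓝 0) := by
    have := Real.isLittleO_log_id_atTop.tendsto_div_nhds_zero
    exact this.comp tendsto_natCast_atTop_atTop
  have hfin := ((hlog.const_mul c).add_const (Real.log q)).sub hlim
  have hlt : c * 0 + Real.log q - Real.log q * f < Real.log q * (1 - kappaSP q τ + ε) := by
    have := mul_lt_mul_of_pos_left hy hlq
    linarith
  have hall := (hev.and (hfin.eventually_lt_const hlt)).and (eventually_gt_atTop 0)
  obtain ⟨n₀, hn₀⟩ := eventually_atTop.mp hall
  refine ⟨n₀, fun n hn C L hL hC => ?_⟩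
  obtain ⟨⟨⟨g1, g2, g3, g4⟩, g5⟩, g6⟩ := hn₀ n hn
  set V : ℕ := (n - w n).choose (l n) * (w n).choose (l n) * (q - 1) ^ (w n) with hV
  have hn0 : (0:ℝ) < n := by exact_mod_cast g6
  have hVpos : 0 < V := by
    have a1 := Nat.choose_pos g3
    have a2 := Nat.choose_pos g2
    have a3 : 0 < q - 1 := by omega
    positivity
  have main : ∀ (D : Finset (Fin n → F)) (K : ℕ), 0 < D.card → (K : ℝ) ≤ (n:ℝ) ^ c →
      pairListDecodable D (τ * n) K → Real.logb q D.card / n ≤ 1 - kappaSP q τ + ε := by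
    intro D K hD hK hDK
    have hc1 := gv_count n D K _ hDK
    have hb := gv_ball (F := F) n (n - w n) (w n) (l n) (by omega)
    rw [hq] at hc1 hb
    have hb2 : (Finset.univ.filter fun v : Fin n → F => pairDist 0 v ≤ w n + l n + 1).card ≤
        (Finset.univ.filter fun v : Fin n → F => (pairDist 0 v : ℝ) ≤ τ * n).card := by
      refine Finset.card_le_card fun v hv => ?_
      simp only [Finset.mem_filter, Finset.mem_univ, true_and] at hv ⊢
      exact le_trans (by exact_mod_cast hv) g4
    have hc2 : D.card * V ≤ K * q ^ n := (Nat.mul_le_mul_left _ (hb.trans hb2)).trans hc1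
    have hc3 : (D.card : ℝ) * V ≤ (n:ℝ) ^ c * (q:ℝ) ^ n := by
      have : (D.card : ℝ) * V ≤ K * (q:ℝ) ^ n := by exact_mod_cast hc2
      exact this.trans (by gcongr)
    have hDr : (0:ℝ) < D.card := by exact_mod_cast hD
    have hVr : (0:ℝ) < V := by exact_mod_cast hVpos
    have hqr : (0:ℝ) < q := by positivity
    have hc4 := Real.log_le_log (by positivity) hc3
    rw [Real.log_mul hDr.ne' hVr.ne', Real.log_mul (by positivity) (by positivity),
      Real.log_rpow hn0, Real.log_pow] at hc4
    have hc5 : Real.log D.card / n ≤ c * (Real.log n / n) + Real.log q - Real.log V / n := by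
      have : c * (Real.log n / n) + Real.log q - Real.log V / n =
        (c * Real.log n + n * Real.log q - Real.log V) / n := by field_simp
      rw [this]
      gcongr
      linarith
    have hc6 := hc5.trans g5.le
    unfold Real.logb
    rw [div_right_comm, div_le_iff₀ hlq]
    linarith
  rcases Nat.eq_zero_or_pos C.card with hz | hp
  · have := main {0} 1 (by simp) (by
      have : (1:ℝ) ≤ n := by exact_mod_cast g6
      simpa using Real.one_le_rpow this hc.le) (by
      intro y
      exact (Finset.card_filter_le _ _).trans (by simp))
    rw [hz]
    simpa using this
  · exact main C L hp hL hC
end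

section
/- (Random symbol-pair codes achieve the Gilbert–Varshamov bound) Let q be a prime power, τ ∈ (0,1), and ε ∈ (0,1) with R := 1 − κ_sp(τ) − ε > 0, and set L = ⌈4/ε⌉ − 1. For all sufficiently large n the following holds: if M = ⌈q^{Rn}⌉ codewords c_1, …, c_M are chosen independently and uniformly at random from F_q^n, then with probability at least 1 − q^{−n} the code C = {c_1,…,c_M} is (τn, L)_P-list decodable. -/
open scoped Classical

open Finset in
lemma path_sum {F : Type*} [Fintype F] (P : F → F → ℝ)
    (hP : ∀ a, ∑ c, P a c = 1) (m : ℕ) :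
    ∑ x : Fin (m+1) → F, ∏ i : Fin m, P (x i.castSucc) (x i.succ) = Fintype.card F := by
  induction m with
  | zero => simp
  | succ m ih =>
    rw [← ih, ← (Fin.snocEquiv (fun _ : Fin (m+2) => F)).sum_comp, Fintype.sum_prod_type_right]
    refine Finset.sum_congr rfl fun x _ => ?_
    simp only [Fin.snocEquiv, Equiv.coe_fn_mk, Fin.prod_univ_castSucc, Fin.succ_castSucc,
      Fin.snoc_castSucc, Fin.succ_last, Fin.snoc_last]
    rw [← Finset.mul_sum, hP, mul_one]

lemma cyc_sum {F : Type*} [Fintype F] (P : F → F → ℝ)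
    (hP : ∀ a, ∑ c, P a c = 1) (h0 : ∀ a c, 0 ≤ P a c) (m : ℕ) :
    ∑ x : Fin (m+1) → F, ∏ i : Fin (m+1), P (x i) (x (i+1)) ≤ Fintype.card F := by
  have h1 : ∀ a c, P a c ≤ 1 := fun a c => by
    rw [← hP a]; exact Finset.single_le_sum (fun c _ => h0 a c) (Finset.mem_univ c)
  rw [← path_sum P hP m]
  refine Finset.sum_le_sum fun x _ => ?_
  rw [Fin.prod_univ_castSucc]
  simp only [Fin.coeSucc_eq_succ]
  exact mul_le_of_le_one_right (Finset.prod_nonneg fun _ _ => h0 _ _) (h1 _ _)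

noncomputable def wtH {F : Type*} [Field F] {m : ℕ} (z : Fin (m+1) → F) : ℕ :=
  (Finset.univ.filter fun i => z i ≠ 0).card

noncomputable def runsH {F : Type*} [Field F] {m : ℕ} (z : Fin (m+1) → F) : ℕ :=
  (Finset.univ.filter fun i => z i = 0 ∧ z (i+1) ≠ 0).card

noncomputable def trP (F : Type*) [Field F] (Q p0 p1 : ℝ) (a c : F) : ℝ :=
  if a = 0 then (if c = 0 then 1 - p0 else p0 / Q) else (if c = 0 then p1 else (1 - p1) / Q)

lemma shift_card {m : ℕ} (p : Fin (m+1) → Prop) :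
    (Finset.univ.filter fun i => p (i+1)).card = (Finset.univ.filter fun i => p i).card := by
  refine Finset.card_bij (fun i _ => i + 1) ?_ ?_ ?_
  · intro a ha; simpa using ha
  · intro a _ b _ h; simpa using h
  · intro b hb; exact ⟨b - 1, by simpa using hb, by simp⟩

lemma card_split {α : Type*} [Fintype α] (p p1 p2 : α → Prop) [DecidablePred p]
    [DecidablePred p1] [DecidablePred p2] (h : ∀ i, p i ↔ p1 i ∨ p2 i)
    (hd : ∀ i, p1 i → ¬ p2 i) :
    (Finset.univ.filter p).card = (Finset.univ.filter p1).card + (Finset.univ.filter p2).card := by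
  rw [← Finset.card_union_of_disjoint]
  · congr 1
    ext i
    simp [h]
  · rw [Finset.disjoint_left]
    intro i hi hi'
    simp only [Finset.mem_filter] at hi hi'
    exact hd i hi.2 hi'.2

lemma counts {F : Type*} [Field F] {m : ℕ} (z : Fin (m+1) → F) :
    (Finset.univ.filter fun i => z i ≠ 0 ∧ z (i+1) = 0).card = runsH z ∧
    (Finset.univ.filter fun i => z i ≠ 0 ∧ z (i+1) ≠ 0).card + runsH z = wtH z ∧
    (Finset.univ.filter fun i => z i = 0 ∧ z (i+1) = 0).card + runsH z + wtH z = m + 1 := by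
  have e1 : (Finset.univ.filter fun i => z i ≠ 0).card =
      (Finset.univ.filter fun i => z i ≠ 0 ∧ z (i+1) = 0).card +
      (Finset.univ.filter fun i => z i ≠ 0 ∧ z (i+1) ≠ 0).card :=
    card_split _ _ _ (fun i => by tauto) (fun i => by tauto)
  have e2 : (Finset.univ.filter fun i => z i = 0).card =
      (Finset.univ.filter fun i => z i = 0 ∧ z (i+1) = 0).card +
      (Finset.univ.filter fun i => z i = 0 ∧ z (i+1) ≠ 0).card :=
    card_split _ _ _ (fun i => by tauto) (fun i => by tauto)
  have e3 : (Finset.univ.filter fun i => z (i+1) ≠ 0).card =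
      (Finset.univ.filter fun i => z i = 0 ∧ z (i+1) ≠ 0).card +
      (Finset.univ.filter fun i => z i ≠ 0 ∧ z (i+1) ≠ 0).card :=
    card_split _ _ _ (fun i => by tauto) (fun i => by tauto)
  have e4 : (Finset.univ.filter fun _ : Fin (m+1) => True).card =
      (Finset.univ.filter fun i => z i = 0).card +
      (Finset.univ.filter fun i => z i ≠ 0).card :=
    card_split _ _ _ (fun i => by tauto) (fun i => by tauto)
  have e5 : (Finset.univ.filter fun i => z (i+1) ≠ 0).card =
      (Finset.univ.filter fun i => z i ≠ 0).card := by
    convert shift_card (fun i => z i ≠ 0)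
  rw [Finset.filter_true, Finset.card_univ, Fintype.card_fin] at e4
  unfold wtH runsH
  refine ⟨?_, ?_, ?_⟩ <;> omega

lemma prod_tr {F : Type*} [Field F] {m : ℕ} (z : Fin (m+1) → F) (Q p0 p1 : ℝ) :
    ∏ i, trP F Q p0 p1 (z i) (z (i+1)) =
      (1 - p0) ^ (m + 1 - wtH z - runsH z) * (p0 / Q) ^ (runsH z) *
      (p1 ^ (runsH z) * ((1 - p1) / Q) ^ (wtH z - runsH z)) := by
  obtain ⟨h1, h2, h3⟩ := counts z
  unfold trP
  simp only [Finset.prod_ite, Finset.filter_filter, Finset.prod_const]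
  simp only [← ne_eq]
  rw [h1]
  congr 3
  · congr 1; omega
  · congr 1; omega

lemma ent_prod (q : ℕ) (hq : 2 ≤ q) (k m : ℕ) (hk : k ≤ m) :
    ((k : ℝ) / m) ^ k * (1 - (k : ℝ) / m) ^ (m - k) / ((q : ℝ) - 1) ^ k
      = (q : ℝ) ^ (-((m : ℝ) * qEntropy q ((k : ℝ) / m))) := by
  have hq' : (2 : ℝ) ≤ q := by exact_mod_cast hq
  have hq0 : (0 : ℝ) < q := by linarith
  have hq1 : (q : ℝ) ≠ 1 := by linarith
  have hpow : ∀ (x : ℝ) (j : ℕ), 0 ≤ x → (x = 0 → j = 0) →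
      x ^ j = (q : ℝ) ^ ((j : ℝ) * Real.logb q x) := by
    intro x j hx h
    rcases hx.eq_or_lt with h0 | h0
    · simp [h h0.symm]
    · rw [mul_comm, Real.rpow_mul hq0.le, Real.rpow_logb hq0 hq1 h0, Real.rpow_natCast]
  rcases Nat.eq_zero_or_pos m with rfl | hm
  · obtain rfl : k = 0 := by omega
    simp
  have hm' : (0 : ℝ) < m := by exact_mod_cast hm
  have hkm : (k : ℝ) ≤ m := by exact_mod_cast hk
  rw [hpow (k / m) k (by positivity) (fun h => by
        rcases div_eq_zero_iff.1 h with h | h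
        · exact_mod_cast h
        · exact absurd h hm'.ne'),
    hpow (1 - k / m) (m - k) (by rw [sub_nonneg, div_le_one hm']; exact hkm) (fun h => by
        have : (k : ℝ) = m := by field_simp at h; linarith
        have : k = m := by exact_mod_cast this
        omega),
    hpow ((q : ℝ) - 1) k (by linarith) (fun h => by linarith),
    ← Real.rpow_add hq0, ← Real.rpow_sub hq0]
  congr 1
  rw [Nat.cast_sub hk]
  unfold qEntropy
  field_simp
  ring

lemma qEnt_le_one (q : ℕ) (hq : 2 ≤ q) (x : ℝ) (h0 : 0 ≤ x) (h1 : x ≤ 1) :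
    qEntropy q x ≤ 3 := by
  have hq' : (2 : ℝ) ≤ q := by exact_mod_cast hq
  have hl : Real.log 2 ≤ Real.log q := Real.log_le_log (by norm_num) hq'
  have hl2 : (0.6 : ℝ) < Real.log 2 := by have := Real.log_two_gt_d9; linarith
  have hlq : 0 < Real.log q := by linarith
  have a1 : Real.logb q (q - 1) ≤ 1 := by
    rw [Real.logb, div_le_one hlq]
    exact Real.log_le_log (by linarith) (by linarith)
  have a2 : ∀ y : ℝ, 0 ≤ y → y ≤ 1 → -(y * Real.logb q y) ≤ 1 - 0 := by
    intro y hy hy1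
    have := Real.negMulLog_le_one_sub_self hy
    have hle : Real.negMulLog y ≤ (1 - y) := this
    have hlow : Real.negMulLog y ≤ 0.5 := by
      have h3 := Real.negMulLog_le_one_sub_self (x := 2 * y) (by linarith)
      rcases hy.eq_or_lt with h | h
      · rw [← h]; norm_num [Real.negMulLog]
      · unfold Real.negMulLog at h3 ⊢
        rw [Real.log_mul (by norm_num) h.ne'] at h3
        have := Real.log_two_lt_d9
        nlinarith
    unfold Real.negMulLog at hlow
    have he : -(y * Real.logb q y) = (-y * Real.log y) / Real.log q := by
      rw [Real.logb]; ring
    rw [he, sub_zero, div_le_one hlq]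
    linarith
  have b1 := a2 x h0 h1
  have b2 := a2 (1 - x) (by linarith) (by linarith)
  have : x * Real.logb q (q - 1) ≤ 1 := by nlinarith
  unfold qEntropy
  linarith

lemma kappa_ge (q : ℕ) (hq : 2 ≤ q) (τ : ℝ) (hτ1 : τ < 1) (β θ : ℝ)
    (h1 : 0 ≤ θ / 2) (h2 : θ / 2 ≤ β) (h3 : β ≤ θ) (h4 : θ ≤ τ) :
    β * qEntropy q ((2 * β - θ) / β) + (1 - β) * qEntropy q ((θ - β) / (1 - β))
      ≤ kappaSP q τ := by
  refine le_csSup ⟨3, ?_⟩ ⟨β, θ, h1, h2, h3, h4, rfl⟩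
  rintro y ⟨β, θ, h1, h2, h3, h4, rfl⟩
  have hb : 0 ≤ β := by linarith
  have hb1 : 0 < 1 - β := by linarith
  have e1 : qEntropy q ((2 * β - θ) / β) ≤ 3 :=
    qEnt_le_one q hq _ (div_nonneg (by linarith) hb) (div_le_one_of_le₀ (by linarith) hb)
  have e2 : qEntropy q ((θ - β) / (1 - β)) ≤ 3 :=
    qEnt_le_one q hq _ (div_nonneg (by linarith) hb1.le)
      (div_le_one_of_le₀ (by linarith) hb1.le)
  nlinarith

lemma type_card {F : Type*} [Field F] [Fintype F] (q : ℕ) (hq : Fintype.card F = q)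
    (hq2 : 2 ≤ q) (τ : ℝ) (hτ1 : τ < 1) (m N w b : ℕ) (hN : N = m + 1)
    (hwb : ((w + b : ℕ) : ℝ) ≤ τ * N) :
    ((Finset.univ.filter fun z : Fin (m+1) → F => wtH z = w ∧ runsH z = b).card : ℝ) ≤
      q * (q : ℝ) ^ (kappaSP q τ * N) := by
  set S := Finset.univ.filter fun z : Fin (m+1) → F => wtH z = w ∧ runsH z = b with hS
  have hq' : (2 : ℝ) ≤ q := by exact_mod_cast hq2
  have hq0 : (0 : ℝ) < q := by linarith
  rcases S.eq_empty_or_nonempty with h | ⟨z0, hz0⟩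
  · rw [h]; simp; positivity
  obtain ⟨rfl, rfl⟩ : wtH z0 = w ∧ runsH z0 = b := by simpa [hS] using hz0
  obtain ⟨-, c2, c3⟩ := counts z0
  set w := wtH z0
  set b := runsH z0
  have hbw : b ≤ w := by omega
  have hNpos : (0 : ℝ) < N := by rw [hN]; positivity
  have hbn : b ≤ N - w := by omega
  have hwN : w < N := by
    have : ((w + b : ℕ) : ℝ) < N := by nlinarith
    have : w + b < N := by exact_mod_cast this
    omega
  have hbw' : (b : ℝ) ≤ w := by exact_mod_cast hbw
  have hw0 : (0 : ℝ) ≤ w := by positivity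
  have hb0 : (0 : ℝ) ≤ b := by positivity
  have hNw : (0 : ℝ) < (N - w : ℕ) := by exact_mod_cast Nat.sub_pos_of_lt hwN
  have hbn' : (b : ℝ) ≤ (N - w : ℕ) := by exact_mod_cast hbn
  set p0 : ℝ := (b : ℝ) / (N - w : ℕ) with hp0
  set k : ℕ := w - b with hk
  set r : ℝ := (k : ℝ) / w with hr
  have hkw : (k : ℝ) ≤ w := by exact_mod_cast Nat.sub_le w b
  have p0n : 0 ≤ p0 := by positivity
  have p01 : p0 ≤ 1 := by rw [hp0, div_le_one hNw]; exact hbn'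
  have rn : 0 ≤ r := by positivity
  have r1 : r ≤ 1 := div_le_one_of_le₀ hkw hw0
  have hQ : (0 : ℝ) < (q : ℝ) - 1 := by linarith
  have htr0 : ∀ a c, 0 ≤ trP F ((q : ℝ) - 1) p0 (1 - r) a c := by
    intro a c
    unfold trP
    split_ifs
    · linarith
    · positivity
    · linarith
    · rw [sub_sub_cancel]; positivity
  have hsum := cyc_sum (trP F ((q : ℝ) - 1) p0 (1 - r)) (by
      intro a
      unfold trP
      have key : ∀ u v : ℝ, ∑ c : F, (if c = 0 then u else v / ((q : ℝ) - 1)) = u + v := by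
        intro u v
        rw [← Finset.add_sum_erase _ _ (Finset.mem_univ (0 : F))]
        rw [Finset.sum_congr rfl (g := fun _ => v / ((q : ℝ) - 1))
          (fun c hc => if_neg (Finset.ne_of_mem_erase hc))]
        rw [Finset.sum_const, Finset.card_erase_of_mem (Finset.mem_univ _), Finset.card_univ, hq,
          if_pos rfl, nsmul_eq_mul, Nat.cast_sub (by omega)]
        push_cast
        field_simp
      split_ifs
      · rw [key]; ring
      · rw [key]; ring) htr0 m
  have hprod : ∀ z ∈ S, (q : ℝ) ^ (-(kappaSP q τ * N)) ≤
      ∏ i, trP F ((q : ℝ) - 1) p0 (1 - r) (z i) (z (i+1)) := by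
    intro z hz
    obtain ⟨hz1, hz2⟩ : wtH z = w ∧ runsH z = b := by simpa [hS] using hz
    rw [prod_tr, hz1, hz2, ← hN]
    have e1 := ent_prod q hq2 b (N - w) hbn
    have e2 := ent_prod q hq2 k w (Nat.sub_le w b)
    have hkk : w - k = b := by omega
    rw [hkk] at e2
    have hre : (1 - p0) ^ (N - w - b) * (p0 / ((q : ℝ) - 1)) ^ b *
        ((1 - r) ^ b * ((1 - (1 - r)) / ((q : ℝ) - 1)) ^ (w - b)) =
        (p0 ^ b * (1 - p0) ^ (N - w - b) / ((q : ℝ) - 1) ^ b) *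
        (r ^ k * (1 - r) ^ b / ((q : ℝ) - 1) ^ k) := by
      rw [sub_sub_cancel, div_pow, div_pow]; ring
    rw [hre, e1, e2, ← Real.rpow_add hq0]
    refine Real.rpow_le_rpow_of_exponent_le (by linarith) ?_
    have hkap := kappa_ge q hq2 τ hτ1 ((w : ℝ) / N) (((w + b : ℕ) : ℝ) / N) (by positivity)
      (by
        rw [div_div, div_le_div_iff₀ (by positivity) hNpos]
        push_cast
        nlinarith)
      (by
        gcongr
        exact Nat.le_add_right _ _)
      (by rw [div_le_iff₀ hNpos]; exact hwb)
    have hNw' : ((N - w : ℕ) : ℝ) = N - w := Nat.cast_sub hwN.le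
    have hk' : (k : ℝ) = w - b := Nat.cast_sub hbw
    have hx1 : (2 * ((w : ℝ) / N) - ((w + b : ℕ) : ℝ) / N) / ((w : ℝ) / N) = r := by
      rw [hr, hk']
      push_cast
      rw [← mul_div_assoc, ← sub_div, div_div_div_cancel_right₀ hNpos.ne']
      congr 1; ring
    have hx2 : (((w + b : ℕ) : ℝ) / N - (w : ℝ) / N) / (1 - (w : ℝ) / N) = p0 := by
      rw [hp0, hNw']
      push_cast
      rw [← sub_div, one_sub_div hNpos.ne', div_div_div_cancel_right₀ hNpos.ne']
      congr 1; ring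
    rw [hx1, hx2] at hkap
    have := mul_le_mul_of_nonneg_right hkap hNpos.le
    have h5 : ((w : ℝ) / N * qEntropy q r + (1 - (w : ℝ) / N) * qEntropy q p0) * N =
        w * qEntropy q r + (N - w) * qEntropy q p0 := by
      field_simp
    rw [h5] at this
    have e6 : ((N - w : ℕ) : ℝ) * qEntropy q ((b : ℝ) / (N - w : ℕ)) =
        (N - w) * qEntropy q p0 := by rw [hp0, hNw']
    have e7 : (w : ℝ) * qEntropy q ((k : ℝ) / w) = w * qEntropy q r := rfl
    rw [e6, e7]
    linarith
  have hfin : (S.card : ℝ) * (q : ℝ) ^ (-(kappaSP q τ * N)) ≤ q := by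
    calc _ = ∑ z ∈ S, (q : ℝ) ^ (-(kappaSP q τ * N)) := by
          rw [Finset.sum_const, nsmul_eq_mul]
      _ ≤ ∑ z ∈ S, ∏ i, trP F ((q : ℝ) - 1) p0 (1 - r) (z i) (z (i+1)) :=
          Finset.sum_le_sum hprod
      _ ≤ ∑ z : Fin (m+1) → F, ∏ i, trP F ((q : ℝ) - 1) p0 (1 - r) (z i) (z (i+1)) :=
          Finset.sum_le_sum_of_subset_of_nonneg (Finset.subset_univ _)
            fun z _ _ => Finset.prod_nonneg fun i _ => htr0 _ _
      _ ≤ _ := by rw [hq] at hsum; exact hsum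
  rw [Real.rpow_neg hq0.le, ← div_eq_mul_inv, div_le_iff₀ (by positivity)] at hfin
  exact hfin

lemma ball_card {F : Type*} [Field F] [Fintype F] [DecidableEq F] (q : ℕ)
    (hq : Fintype.card F = q)
    (hq2 : 2 ≤ q) (τ : ℝ) (hτ1 : τ < 1) (n : ℕ) (hn : 0 < n) (y : Fin n → F) :
    ((Finset.univ.filter fun c : Fin n → F => (pairDist y c : ℝ) ≤ τ * n).card : ℝ) ≤
      ((n : ℝ) + 1) ^ 2 * (q * (q : ℝ) ^ (kappaSP q τ * n)) := by
  obtain ⟨m, rfl⟩ : ∃ m, n = m + 1 := ⟨n - 1, by omega⟩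
  have hd : ∀ c, pairDist y c = wtH (c - y) + runsH (c - y) := by
    intro c
    unfold pairDist wtH runsH
    rw [← Finset.card_union_of_disjoint]
    · congr 1
      ext i
      have hi : (⟨(i.1 + 1) % (m + 1), Nat.mod_lt _ i.pos⟩ : Fin (m + 1)) = i + 1 := by
        apply Fin.ext; simp [Fin.val_add]
      simp only [hi, Finset.mem_filter, Finset.mem_univ, true_and, Finset.mem_union, ne_eq,
        Prod.mk.injEq, Pi.sub_apply, sub_eq_zero, eq_comm (a := y _)]
      tauto
    · rw [Finset.disjoint_left]
      intro i hi hi'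
      simp only [Finset.mem_filter] at hi hi'
      exact hi.2 hi'.2.1
  have hle : ∀ z : Fin (m+1) → F, wtH z < m + 2 ∧ runsH z < m + 2 := by
    intro z
    have := counts z
    omega
  set T := ((Finset.range (m + 2)) ×ˢ (Finset.range (m + 2))).filter
    (fun p : ℕ × ℕ => ((p.1 + p.2 : ℕ) : ℝ) ≤ τ * (m + 1 : ℕ)) with hT
  have hsub : ((Finset.univ.filter fun c : Fin (m+1) → F =>
      (pairDist y c : ℝ) ≤ τ * (m + 1 : ℕ)).card) ≤
      (T.biUnion fun p => Finset.univ.filter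
        fun z : Fin (m+1) → F => wtH z = p.1 ∧ runsH z = p.2).card := by
    refine Finset.card_le_card_of_injOn (fun c => c - y) ?_ ?_
    · intro c hc
      have hc' : (pairDist y c : ℝ) ≤ τ * (m + 1 : ℕ) := by simpa using hc
      rw [hd] at hc'
      simp only [Finset.coe_biUnion, Set.mem_iUnion]
      refine ⟨(wtH (c - y), runsH (c - y)), ?_, by simp⟩
      simp only [hT, Finset.coe_filter, Finset.mem_product, Finset.mem_range, Set.mem_setOf_eq]
      exact ⟨hle _, hc'⟩
    · intro a _ b _ h
      simpa using h
  have hB : (0 : ℝ) ≤ q * (q : ℝ) ^ (kappaSP q τ * (m + 1 : ℕ)) := by positivity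
  calc _ ≤ (((T.biUnion fun p => Finset.univ.filter
        fun z : Fin (m+1) → F => wtH z = p.1 ∧ runsH z = p.2).card : ℕ) : ℝ) := by
        exact_mod_cast hsub
    _ ≤ ∑ p ∈ T, ((Finset.univ.filter
        fun z : Fin (m+1) → F => wtH z = p.1 ∧ runsH z = p.2).card : ℝ) := by
        exact_mod_cast Finset.card_biUnion_le
    _ ≤ ∑ p ∈ T, q * (q : ℝ) ^ (kappaSP q τ * (m + 1 : ℕ)) := by
        refine Finset.sum_le_sum fun p hp => type_card q hq hq2 τ hτ1 m (m+1) p.1 p.2 rfl ?_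
        simp only [hT, Finset.mem_filter] at hp
        exact hp.2
    _ = (T.card : ℝ) * (q * (q : ℝ) ^ (kappaSP q τ * (m + 1 : ℕ))) := by
        rw [Finset.sum_const, nsmul_eq_mul]
    _ ≤ _ := by
        refine mul_le_mul_of_nonneg_right ?_ hB
        have : T.card ≤ (m + 2) * (m + 2) := by
          refine (Finset.card_filter_le _ _).trans ?_
          simp
        have h2 : (T.card : ℝ) ≤ ((m + 2) * (m + 2) : ℕ) := by exact_mod_cast this
        refine h2.trans (le_of_eq ?_)
        push_cast; ring

lemma bad_card {F : Type*} [Field F] [Fintype F] [DecidableEq F] (q : ℕ)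
    (hq : Fintype.card F = q) (n M L l : ℕ) (hl : l = L + 1) (r B : ℝ)
    (hB : ∀ y : Fin n → F,
      ((Finset.univ.filter fun c : Fin n → F => (pairDist y c : ℝ) ≤ r).card : ℝ) ≤ B) :
    ((Finset.univ.filter fun f : Fin M → (Fin n → F) =>
      ¬ pairListDecodable (Finset.image f Finset.univ) r L).card : ℝ) * ((q : ℝ) ^ n) ^ l ≤
      (q : ℝ) ^ n * ((M : ℝ) ^ l * (B ^ l * ((q : ℝ) ^ n) ^ M)) := by
  let A : (Fin n → F) → Finset (Fin n → F) := fun y =>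
    Finset.univ.filter fun c : Fin n → F => (pairDist y c : ℝ) ≤ r
  let G : (Fin n → F) × Finset (Fin M) → Finset (Fin M → (Fin n → F)) := fun p =>
    Fintype.piFinset fun i => if i ∈ p.2 then A p.1 else Finset.univ
  have hB0 : 0 ≤ B := le_trans (by positivity) (hB 0)
  have hsub : (Finset.univ.filter fun f : Fin M → (Fin n → F) =>
      ¬ pairListDecodable (Finset.image f Finset.univ) r L) ⊆
      (Finset.univ ×ˢ Finset.powersetCard l (Finset.univ : Finset (Fin M))).biUnion G := by
    intro f hf
    have hf' : ¬ pairListDecodable (Finset.image f Finset.univ) r L := by simpa using hf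
    unfold pairListDecodable at hf'
    push Not at hf'
    obtain ⟨y, hy⟩ := hf'
    have h1 : l ≤ (Finset.univ.filter fun i : Fin M => (pairDist y (f i) : ℝ) ≤ r).card := by
      rw [Finset.filter_image] at hy
      have := hy.trans_le Finset.card_image_le
      omega
    obtain ⟨S, hS, hSc⟩ := Finset.exists_subset_card_eq h1
    rw [Finset.mem_biUnion]
    refine ⟨(y, S), by simp [hSc], ?_⟩
    simp only [G, Fintype.mem_piFinset]
    intro i
    split_ifs with hi
    · have := hS hi
      simpa [A] using this
    · simp
  have hG : ∀ p ∈ (Finset.univ ×ˢ Finset.powersetCard l (Finset.univ : Finset (Fin M)) :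
      Finset ((Fin n → F) × Finset (Fin M))),
      ((G p).card : ℝ) * ((q : ℝ) ^ n) ^ l ≤ B ^ l * ((q : ℝ) ^ n) ^ M := by
    rintro ⟨y, S⟩ hp
    have hS : S.card = l := by simpa using hp
    have hc : (G (y, S)).card = (A y).card ^ l * (q ^ n) ^ (M - l) := by
      simp only [G, Fintype.card_piFinset, apply_ite Finset.card, Finset.prod_ite,
        Finset.prod_const]
      congr 2
      · rw [← hS]; congr 1; ext; simp
      · simp [hq]
      · rw [← hS, Finset.filter_not, Finset.card_sdiff_of_subset (Finset.filter_subset _ _)]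
        simp
    have hlM : l ≤ M := by
      rw [← hS]; simpa using Finset.card_le_univ S
    rw [hc]
    push_cast
    rw [mul_assoc, ← pow_add, Nat.sub_add_cancel hlM]
    gcongr
    exact hB y
  have hcard := (Finset.card_le_card hsub).trans Finset.card_biUnion_le
  have hcard' : ((Finset.univ.filter fun f : Fin M → (Fin n → F) =>
      ¬ pairListDecodable (Finset.image f Finset.univ) r L).card : ℝ) ≤
      ∑ p ∈ (Finset.univ ×ˢ Finset.powersetCard l (Finset.univ : Finset (Fin M)) :
      Finset ((Fin n → F) × Finset (Fin M))), ((G p).card : ℝ) := by exact_mod_cast hcard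
  calc _ ≤ (∑ p ∈ (Finset.univ ×ˢ Finset.powersetCard l (Finset.univ : Finset (Fin M)) :
      Finset ((Fin n → F) × Finset (Fin M))), ((G p).card : ℝ)) * ((q : ℝ) ^ n) ^ l := by
        gcongr
    _ ≤ ∑ p ∈ (Finset.univ ×ˢ Finset.powersetCard l (Finset.univ : Finset (Fin M)) :
      Finset ((Fin n → F) × Finset (Fin M))), B ^ l * ((q : ℝ) ^ n) ^ M := by
        rw [Finset.sum_mul]
        exact Finset.sum_le_sum hG
    _ = (q : ℝ) ^ n * (M.choose l : ℝ) * (B ^ l * ((q : ℝ) ^ n) ^ M) := by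
        rw [Finset.sum_const, nsmul_eq_mul]
        simp [hq]
    _ ≤ _ := by
        rw [mul_assoc]
        have : (M.choose l : ℝ) ≤ (M : ℝ) ^ l := by exact_mod_cast Nat.choose_le_pow M l
        gcongr

lemma growth (q : ℕ) (hq2 : 2 ≤ q) (ε : ℝ) (hε0 : 0 < ε) :
    ∃ n₀ : ℕ, ∀ n : ℕ, n₀ ≤ n →
      2 * q * ((n : ℝ) + 1) ^ 2 ≤ (q : ℝ) ^ (ε / 2 * n) := by
  have hq' : (2 : ℝ) ≤ q := by exact_mod_cast hq2
  have hq0 : (0 : ℝ) < q := by linarith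
  set c : ℝ := (q : ℝ) ^ (ε / 2) with hc
  have hc1 : 1 < c := Real.one_lt_rpow (by linarith) (by linarith)
  have ht := tendsto_pow_const_div_const_pow_of_one_lt 2 hc1
  have ht' := ht.eventually (gt_mem_nhds (show (0 : ℝ) < 1 / (8 * q) by positivity))
  obtain ⟨n₀, h⟩ := Filter.eventually_atTop.1 ht'
  refine ⟨max n₀ 1, fun n hn => ?_⟩
  have h1 := h n (le_trans (le_max_left _ _) hn)
  have hn1 : (1 : ℝ) ≤ n := by exact_mod_cast le_trans (le_max_right _ _) hn
  rw [Real.rpow_mul hq0.le, Real.rpow_natCast, ← hc]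
  have hcn : 0 < c ^ n := by positivity
  rw [div_lt_div_iff₀ hcn (by positivity)] at h1
  have : ((n : ℝ) + 1) ^ 2 ≤ 4 * (n : ℝ) ^ 2 := by nlinarith
  nlinarith

/-- (Random symbol-pair codes achieve the Gilbert–Varshamov bound) Let `q` be the size
of the finite field `F`, `τ ∈ (0,1)`, `ε ∈ (0,1)` with `R := 1 − κ_sp(τ) − ε > 0`, and
`L = ⌈4/ε⌉ − 1`. For all sufficiently large `n`: among all `M = ⌈q^{Rn}⌉`-tuples of
codewords (i.e. codewords chosen independently and uniformly at random from `F_q^n`),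
the fraction of tuples whose code `C = {c_1,…,c_M}` is `(τn, L)_P`-list decodable is
at least `1 − q^{−n}`; equivalently, at least `(1 − q^{−n})·q^{nM}` of all `q^{nM}`
tuples yield a `(τn, L)_P`-list decodable code. -/
theorem random_pair_codes_achieve_gv {F : Type*} [Field F] [Fintype F] [DecidableEq F]
    {q : ℕ} (hq : Fintype.card F = q) (τ ε R : ℝ)
    (hτ0 : 0 < τ) (hτ1 : τ < 1) (hε0 : 0 < ε) (hε1 : ε < 1)
    (hR : R = 1 - kappaSP q τ - ε) (hRpos : 0 < R) :
    ∃ n₀ : ℕ, ∀ n : ℕ, n₀ ≤ n →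
      ∀ M L : ℕ, M = ⌈(q : ℝ) ^ (R * (n : ℝ))⌉₊ → L = ⌈(4 : ℝ) / ε⌉₊ - 1 →
      (1 - ((q : ℝ) ^ n)⁻¹) * (q : ℝ) ^ (n * M) ≤
        ((Finset.univ.filter fun f : Fin M → (Fin n → F) =>
            pairListDecodable (Finset.image f Finset.univ) (τ * n) L).card : ℝ) := by
  have hq2 : 2 ≤ q := by rw [← hq]; exact Fintype.one_lt_card
  have hq' : (2 : ℝ) ≤ q := by exact_mod_cast hq2
  have hq0 : (0 : ℝ) < q := by linarith
  obtain ⟨n₀, hn₀⟩ := growth q hq2 ε hε0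
  refine ⟨max n₀ 1, fun n hn M L hM hL => ?_⟩
  have hg := hn₀ n (le_trans (le_max_left _ _) hn)
  have hn1 : 0 < n := le_trans (le_max_right _ _) hn
  set l : ℕ := ⌈(4 : ℝ) / ε⌉₊ with hl
  have hl4 : (4 : ℝ) / ε ≤ l := Nat.le_ceil _
  have hlpos : 0 < l := Nat.ceil_pos.2 (by positivity)
  set B : ℝ := ((n : ℝ) + 1) ^ 2 * (q * (q : ℝ) ^ (kappaSP q τ * n)) with hB
  have hB0 : 0 ≤ B := by positivity
  have hbad := bad_card q hq n M L l (by omega) (τ * n) B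
    (fun y => ball_card q hq hq2 τ hτ1 n hn1 y)
  set bad : ℕ := (Finset.univ.filter fun f : Fin M → (Fin n → F) =>
      ¬ pairListDecodable (Finset.image f Finset.univ) (τ * n) L).card with hbd
  have htot := Finset.card_filter_add_card_filter_not
    (s := (Finset.univ : Finset (Fin M → (Fin n → F))))
    (fun f => pairListDecodable (Finset.image f Finset.univ) (τ * n) L)
  have hcu : (Finset.univ : Finset (Fin M → (Fin n → F))).card = q ^ (n * M) := by
    simp [hq, pow_mul]
  rw [hcu] at htot
  have htot' : ((Finset.univ.filter fun f : Fin M → (Fin n → F) =>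
      pairListDecodable (Finset.image f Finset.univ) (τ * n) L).card : ℝ) + bad
      = (q : ℝ) ^ (n * M) := by exact_mod_cast htot
  have hx1 : (1 : ℝ) ≤ (q : ℝ) ^ (R * n) :=
    Real.one_le_rpow (by linarith) (by positivity)
  have hM2 : (M : ℝ) ≤ 2 * (q : ℝ) ^ (R * n) := by
    rw [hM]
    have := Nat.ceil_lt_add_one (show (0 : ℝ) ≤ (q : ℝ) ^ (R * n) by positivity)
    linarith
  have hMB : M * B ≤ (q : ℝ) ^ n * (q : ℝ) ^ (-(ε / 2 * n)) := by
    calc (M : ℝ) * B ≤ 2 * (q : ℝ) ^ (R * n) * B := by gcongr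
      _ = (2 * q * ((n : ℝ) + 1) ^ 2) * ((q : ℝ) ^ (R * n) * (q : ℝ) ^ (kappaSP q τ * n)) := by
          rw [hB]; ring
      _ ≤ (q : ℝ) ^ (ε / 2 * n) * ((q : ℝ) ^ (R * n) * (q : ℝ) ^ (kappaSP q τ * n)) := by
          gcongr
      _ = _ := by
          rw [← Real.rpow_natCast (q : ℝ) n, ← Real.rpow_add hq0, ← Real.rpow_add hq0,
            ← Real.rpow_add hq0, hR]
          congr 1; ring
  have hMBl : (M : ℝ) ^ l * B ^ l ≤ ((q : ℝ) ^ n) ^ l * ((q : ℝ) ^ (2 * n))⁻¹ := by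
    rw [← mul_pow]
    calc (M * B) ^ l ≤ ((q : ℝ) ^ n * (q : ℝ) ^ (-(ε / 2 * n))) ^ l := by gcongr
      _ = ((q : ℝ) ^ n) ^ l * (q : ℝ) ^ (-(ε / 2 * n) * l) := by
          rw [mul_pow, Real.rpow_mul hq0.le, Real.rpow_natCast]
      _ ≤ _ := by
          gcongr
          rw [← Real.rpow_natCast, ← Real.rpow_neg hq0.le]
          refine Real.rpow_le_rpow_of_exponent_le (by linarith) ?_
          rw [div_le_iff₀ hε0] at hl4
          push_cast
          have : (0 : ℝ) ≤ n := by positivity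
          nlinarith
  have hqn : (0 : ℝ) < (q : ℝ) ^ n := by positivity
  have hfin : (bad : ℝ) ≤ ((q : ℝ) ^ n)⁻¹ * (q : ℝ) ^ (n * M) := by
    have h1 : (bad : ℝ) * ((q : ℝ) ^ n) ^ l ≤
        (((q : ℝ) ^ n)⁻¹ * (q : ℝ) ^ (n * M)) * ((q : ℝ) ^ n) ^ l := by
      refine hbad.trans ?_
      calc _ = (q : ℝ) ^ n * ((q : ℝ) ^ n) ^ M * ((M : ℝ) ^ l * B ^ l) := by ring
        _ ≤ (q : ℝ) ^ n * ((q : ℝ) ^ n) ^ M * (((q : ℝ) ^ n) ^ l * ((q : ℝ) ^ (2 * n))⁻¹) := by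
            gcongr
        _ = _ := by
            rw [mul_comm 2 n, pow_mul, pow_mul]
            field_simp
    exact le_of_mul_le_mul_right h1 (by positivity)
  linarith
end

section
/- Let q be a prime power, γ a primitive element of F_q, and let k, n be integers with 1 ≤ k ≤ n − 2 and n ≤ q − 1. Consider the folded Reed–Solomon code FRS[n−1, k] ⊆ (F_q × F_q)^{n−1}, whose codeword for a polynomial f ∈ F_q[x] of degree at most k−1 is the length-(n−1) vector ((f(γ^{i−1}), f(γ^i)))_{i=1,…,n−1}. Then for every received word b ∈ (F_q × F_q)^{n−1}, the number of polynomials f of degree at most k−1 whose codeword differs from b in at most τ(n−1) coordinates is at most q, where τ = (2/3)·(n−2−k)/(n−1). That is, FRS[n−1,k] is (τ(n−1), q)-list decodable in the Hamming metric over the alphabet F_q × F_q. -/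
open Polynomial in
theorem frs_interp {F : Type*} [Field F] (N D k : ℕ) (h : N < 3 * D + k + 2)
    (x y z : Fin N → F) : ∃ A0 A1 A2 : F[X], (A0 ≠ 0 ∨ A1 ≠ 0 ∨ A2 ≠ 0) ∧
      A0.degree < ((D + k : ℕ) : WithBot ℕ) ∧ A1.degree < ((D + 1 : ℕ) : WithBot ℕ) ∧
      A2.degree < ((D + 1 : ℕ) : WithBot ℕ) ∧
      ∀ i, A0.eval (x i) + A1.eval (x i) * y i + A2.eval (x i) * z i = 0 := by
  let L : (degreeLT F (D + k) × degreeLT F (D + 1) × degreeLT F (D + 1)) →ₗ[F] (Fin N → F) :=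
    { toFun := fun p i => p.1.1.eval (x i) + p.2.1.1.eval (x i) * y i
        + p.2.2.1.eval (x i) * z i
      map_add' := by
        intro p r
        funext i
        simp
        ring
      map_smul' := by
        intro c p
        funext i
        simp
        ring }
  have hf : ∀ m, Module.finrank F (degreeLT F m) = m := fun m => by
    rw [LinearEquiv.finrank_eq (degreeLTEquiv F m)]; simp
  haveI : ∀ m, Module.Finite F (degreeLT F m) := fun m =>
    Module.Finite.equiv (degreeLTEquiv F m).symm
  have hker : LinearMap.ker L ≠ ⊥ := by
    apply LinearMap.ker_ne_bot_of_finrank_lt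
    rw [Module.finrank_prod, Module.finrank_prod, hf, hf]
    simp
    omega
  obtain ⟨p, hp, hp0⟩ := Submodule.exists_mem_ne_zero_of_ne_bot hker
  refine ⟨p.1.1, p.2.1.1, p.2.2.1, ?_, mem_degreeLT.1 p.1.2, mem_degreeLT.1 p.2.1.2,
    mem_degreeLT.1 p.2.2.2, fun i => congrFun (LinearMap.mem_ker.1 hp) i⟩
  by_contra hcon
  push Not at hcon
  apply hp0
  obtain ⟨h0, h1, h2⟩ := hcon
  exact Prod.ext (Subtype.ext h0) (Prod.ext (Subtype.ext h1) (Subtype.ext h2))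

open Polynomial in
theorem frs_deg {F : Type*} [Field F] (γ : F) (hγ0 : γ ≠ 0) (A1 A2 g h : F[X])
    (hA : A1 ≠ 0 ∨ A2 ≠ 0) (hg : g ≠ 0) (hh : h ≠ 0)
    (eg : A1 * g + A2 * g.comp (C γ * X) = 0) (eh : A1 * h + A2 * h.comp (C γ * X) = 0) :
    γ ^ g.natDegree = γ ^ h.natDegree := by
  have hnd : (C γ * X : F[X]).natDegree ≠ 0 := by rw [natDegree_C_mul_X _ hγ0]; exact one_ne_zero
  have lc : ∀ p : F[X], (p.comp (C γ * X)).leadingCoeff = p.leadingCoeff * γ ^ p.natDegree := by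
    intro p
    rw [leadingCoeff_comp hnd]; simp
  have hc : g.comp (C γ * X) ≠ 0 := by
    rw [← leadingCoeff_ne_zero, lc]
    exact mul_ne_zero (leadingCoeff_ne_zero.2 hg) (pow_ne_zero _ hγ0)
  have h1 : A1 ≠ 0 := by
    rintro rfl
    simp [hc] at eg
    simp [eg] at hA
  have h2 : A2 ≠ 0 := by
    rintro rfl
    simp [h1, hg] at eg
  have key : g * h.comp (C γ * X) = h * g.comp (C γ * X) := by
    have : (A1 * A2) * (g * h.comp (C γ * X) - h * g.comp (C γ * X)) = 0 := by
      linear_combination A2 * h.comp (C γ * X) * eg - A2 * g.comp (C γ * X) * eh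
    rcases mul_eq_zero.1 this with h' | h'
    · exact absurd h' (mul_ne_zero h1 h2)
    · exact sub_eq_zero.1 h'
  have := congrArg leadingCoeff key
  rw [leadingCoeff_mul, leadingCoeff_mul, lc, lc] at this
  have hgl := leadingCoeff_ne_zero.2 hg
  have hhl := leadingCoeff_ne_zero.2 hh
  have h3 : (g.leadingCoeff * h.leadingCoeff) * γ ^ h.natDegree
      = (g.leadingCoeff * h.leadingCoeff) * γ ^ g.natDegree := by
    linear_combination this
  exact (mul_left_cancel₀ (mul_ne_zero hgl hhl) h3).symm

open Polynomial in
theorem frs_count {F : Type*} [Field F] [Fintype F] (γ : F) (hγ0 : γ ≠ 0) (k : ℕ)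
    (hk : 1 ≤ k) (hkγ : k ≤ orderOf γ) (A0 A1 A2 : F[X]) (hA : A1 ≠ 0 ∨ A2 ≠ 0) (S : Set F[X])
    (hS : ∀ f ∈ S, f.natDegree ≤ k - 1 ∧ A0 + A1 * f + A2 * f.comp (C γ * X) = 0) :
    S.Finite ∧ S.ncard ≤ Fintype.card F := by
  have hdiff : ∀ f ∈ S, ∀ f' ∈ S, A1 * (f - f') + A2 * (f - f').comp (C γ * X) = 0 := by
    intro f hf f' hf'
    rw [sub_comp]
    linear_combination (hS f hf).2 - (hS f' hf').2
  have hdeg : ∀ f ∈ S, ∀ f' ∈ S, (f - f').natDegree < orderOf γ := by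
    intro f hf f' hf'
    have := natDegree_sub_le f f'
    have := (hS f hf).1
    have := (hS f' hf').1
    omega
  have hinj : ∃ d : ℕ, Set.InjOn (fun f : F[X] => f.coeff d) S := by
    by_cases hs : S.Subsingleton
    · exact ⟨0, hs.injOn _⟩
    · rw [Set.not_subsingleton_iff] at hs
      obtain ⟨f, hf, f', hf', hne⟩ := hs
      refine ⟨(f - f').natDegree, fun u hu v hv huv => ?_⟩
      by_contra huv'
      have h1 := frs_deg γ hγ0 A1 A2 _ _ hA (sub_ne_zero.2 hne) (sub_ne_zero.2 huv')
        (hdiff f hf f' hf') (hdiff u hu v hv)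
      have h2 := pow_injOn_Iio_orderOf (hdeg f hf f' hf') (hdeg u hu v hv) h1
      have h3 : (u - v).leadingCoeff = 0 := by
        rw [leadingCoeff, ← h2, coeff_sub]
        exact sub_eq_zero.2 huv
      exact sub_ne_zero.2 huv' (leadingCoeff_eq_zero.1 h3)
  obtain ⟨d, hd⟩ := hinj
  refine ⟨Set.Finite.of_finite_image (Set.toFinite _) hd, ?_⟩
  rw [← Set.ncard_image_of_injOn hd, ← Nat.card_eq_fintype_card, ← Set.ncard_univ]
  exact Set.ncard_le_ncard (Set.subset_univ _) (Set.toFinite _)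

/-- (List decoding of folded Reed–Solomon codes) Let `F` be the finite field of size
`q`, `γ` a primitive element of `F`, and `1 ≤ k ≤ n − 2`, `n ≤ q − 1`. The folded
Reed–Solomon code `FRS[n−1, k]` encodes a polynomial `f` of degree at most `k−1` as
the vector `((f(γ^{i−1}), f(γ^i)))_{i=1,…,n−1} ∈ (F × F)^{n−1}`. Then for every
received word `b ∈ (F × F)^{n−1}`, the set of polynomials `f` of degree at most `k−1`
whose codeword is within Hamming distance `τ(n−1) = (2/3)(n−2−k)` of `b` is finite of
size at most `q`. -/
theorem folded_RS_list_decodable {F : Type*} [Field F] [Fintype F] [DecidableEq F]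
    {q n k : ℕ} (hq : Fintype.card F = q)
    (γ : F) (hγ : orderOf γ = q - 1)
    (hk : 1 ≤ k) (hkn : k ≤ n - 2) (hnq : n ≤ q - 1)
    (b : Fin (n - 1) → F × F) :
    {f : Polynomial F | f.natDegree ≤ k - 1 ∧
      (hammingDist
        (fun i : Fin (n - 1) => (f.eval (γ ^ (i : ℕ)), f.eval (γ ^ ((i : ℕ) + 1))))
        b : ℝ) ≤ 2 / 3 * ((n : ℝ) - 2 - (k : ℝ))}.Finite ∧
    {f : Polynomial F | f.natDegree ≤ k - 1 ∧
      (hammingDist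
        (fun i : Fin (n - 1) => (f.eval (γ ^ (i : ℕ)), f.eval (γ ^ ((i : ℕ) + 1))))
        b : ℝ) ≤ 2 / 3 * ((n : ℝ) - 2 - (k : ℝ))}.ncard ≤ q := by
  subst hq
  have hn3 : 3 ≤ n := by omega
  have hγ0 : γ ≠ 0 := by
    rintro rfl
    rw [orderOf_zero] at hγ
    omega
  obtain ⟨A0, A1, A2, hne, hd0, hd1, hd2, hint⟩ := frs_interp (n - 1) ((n - 2 - k + 2) / 3) k
    (by omega) (fun i => γ ^ (i : ℕ)) (fun i => (b i).1) (fun i => (b i).2)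
  generalize hD : (n - 2 - k + 2) / 3 = D at *
  have hinjγ : Function.Injective (fun i : Fin (n - 1) => γ ^ (i : ℕ)) := by
    intro i j hij
    apply Fin.ext
    refine pow_injOn_Iio_orderOf ?_ ?_ hij
    · have := i.2
      simp only [Set.mem_Iio]
      omega
    · have := j.2
      simp only [Set.mem_Iio]
      omega
  have e0 : A0.natDegree ≤ D + k - 1 := by
    by_cases h : A0 = 0
    · simp [h]
    · have := (Polynomial.natDegree_lt_iff_degree_lt h).2 hd0
      omega
  have e1 : A1.natDegree ≤ D := by
    by_cases h : A1 = 0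
    · simp [h]
    · have := (Polynomial.natDegree_lt_iff_degree_lt h).2 hd1
      omega
  have e2 : A2.natDegree ≤ D := by
    by_cases h : A2 = 0
    · simp [h]
    · have := (Polynomial.natDegree_lt_iff_degree_lt h).2 hd2
      omega
  set S := {f : Polynomial F | f.natDegree ≤ k - 1 ∧
      (hammingDist
        (fun i : Fin (n - 1) => (f.eval (γ ^ (i : ℕ)), f.eval (γ ^ ((i : ℕ) + 1))))
        b : ℝ) ≤ 2 / 3 * ((n : ℝ) - 2 - (k : ℝ))} with hSdef
  have hS : ∀ f ∈ S, f.natDegree ≤ k - 1 ∧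
      A0 + A1 * f + A2 * f.comp (Polynomial.C γ * Polynomial.X) = 0 := by
    rintro f ⟨hf, hdist⟩
    refine ⟨hf, ?_⟩
    have hdist' : 3 * hammingDist
        (fun i : Fin (n - 1) => (f.eval (γ ^ (i : ℕ)), f.eval (γ ^ ((i : ℕ) + 1)))) b
        + 2 * 2 + 2 * k ≤ 2 * n := by
      have : (3 : ℝ) * (hammingDist
        (fun i : Fin (n - 1) => (f.eval (γ ^ (i : ℕ)), f.eval (γ ^ ((i : ℕ) + 1)))) b : ℝ)
        + 2 * 2 + 2 * k ≤ 2 * n := by linarith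
      exact_mod_cast this
    have hcard := Finset.card_filter_add_card_filter_not (s := (Finset.univ : Finset (Fin (n - 1))))
      (fun i => (f.eval (γ ^ (i : ℕ)), f.eval (γ ^ ((i : ℕ) + 1))) ≠ b i)
    rw [Finset.card_univ, Fintype.card_fin] at hcard
    unfold hammingDist at hdist'
    beta_reduce at hdist'
    have hfc : (f.comp (Polynomial.C γ * Polynomial.X)).natDegree ≤ k - 1 := by
      rw [Polynomial.natDegree_comp, Polynomial.natDegree_C_mul_X _ hγ0]
      omega
    apply Polynomial.eq_zero_of_natDegree_lt_card_of_eval_eq_zero' _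
      ((Finset.univ.filter (fun i : Fin (n - 1) =>
        ¬ ((f.eval (γ ^ (i : ℕ)), f.eval (γ ^ ((i : ℕ) + 1))) ≠ b i))).image
          (fun i : Fin (n - 1) => γ ^ (i : ℕ)))
    · intro x hx
      obtain ⟨i, hi, rfl⟩ := Finset.mem_image.1 hx
      have hi' := not_not.1 (Finset.mem_filter.1 hi).2
      have := hint i
      rw [← hi'] at this
      simp only [Polynomial.eval_add, Polynomial.eval_mul, Polynomial.eval_comp,
        Polynomial.eval_C, Polynomial.eval_X]
      rw [← pow_succ']
      exact this
    · rw [Finset.card_image_of_injective _ hinjγ]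
      have hle : (A0 + A1 * f + A2 * f.comp (Polynomial.C γ * Polynomial.X)).natDegree
          ≤ D + k - 1 := by
        refine Polynomial.natDegree_add_le_of_degree_le
          (Polynomial.natDegree_add_le_of_degree_le e0 ?_) ?_
        · exact Polynomial.natDegree_mul_le.trans (by omega)
        · exact Polynomial.natDegree_mul_le.trans (by omega)
      omega
  by_cases hA : A1 ≠ 0 ∨ A2 ≠ 0
  · exact frs_count γ hγ0 k hk (by omega) A0 A1 A2 hA S hS
  · have hA1 : A1 = 0 := by tauto
    have hA2 : A2 = 0 := by tauto
    have hA0 : A0 ≠ 0 := by tauto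
    have hE : S = ∅ := by
      apply Set.eq_empty_of_forall_notMem
      intro f hf
      have := (hS f hf).2
      simp [hA1, hA2] at this
      exact hA0 this
    rw [hE]
    simp
end
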